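/- arXiv:1701.02167 — 3 statements merged into one kernel-verified Lean document; each statement's English description precedes it below -/
import Mathlib

section
/- Let T > 0 and let x : [0,T] → ℝ be càdlàg and continuous at T. Extend x to [−1, T] by setting x(s) := x(0) for s ∈ [−1, 0). For n ≥ 1 define x_n : [0,T] → ℝ by x_n(t) := n·∫_{t−1/n}^{t} x(s) ds. Then each x_n is continuous and x_n → x in the Skorokhod M1 topology on [0,T], i.e. d_{M1}(x_n, x) → 0 as n → ∞. In particular, every càdlàg function on [0,T] is an M1-limit of absolutely continuous functions. -/
open Filter Set MeasureTheory Topology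

noncomputable section

/-- A function `x : ℝ → ℝ` is càdlàg on `[0,T]`. -/
def Cadlag (T : ℝ) (x : ℝ → ℝ) : Prop :=
  (∀ t ∈ Set.Ico (0:ℝ) T, Filter.Tendsto x (nhdsWithin t (Set.Ici t)) (nhds (x t))) ∧
  (∀ t ∈ Set.Ioc (0:ℝ) T, ∃ L : ℝ, Filter.Tendsto x (nhdsWithin t (Set.Iio t)) (nhds L))

/-- The left limit `x(t−)`, with the convention `x(0−) := x(0)`. -/
def leftVal (x : ℝ → ℝ) (t : ℝ) : ℝ := if t ≤ 0 then x 0 else Function.leftLim x t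

/-- The completed graph `Γ(x)` of a càdlàg path on `[0,T]` (vertical segments at jumps). -/
def compGraph (T : ℝ) (x : ℝ → ℝ) : Set (ℝ × ℝ) :=
  {pt | pt.2 ∈ Set.Icc (0:ℝ) T ∧ ∃ c ∈ Set.Icc (0:ℝ) 1,
    pt.1 = c * leftVal x pt.2 + (1 - c) * x pt.2}

/-- The order on the completed graph: `(z₁,t₁) ≤ (z₂,t₂)` iff `t₁ < t₂`, or `t₁ = t₂`
and `|z₁ − x(t₁−)| ≤ |z₂ − x(t₁−)|`. -/
def graphLE (x : ℝ → ℝ) (p₁ p₂ : ℝ × ℝ) : Prop :=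
  p₁.2 < p₂.2 ∨ (p₁.2 = p₂.2 ∧ |p₁.1 - leftVal x p₁.2| ≤ |p₂.1 - leftVal x p₁.2|)

/-- `(u,r) : [0,1] → Γ(x)` is a parametric representation of `x`: continuous, onto the
completed graph, and nondecreasing for the order of the completed graph. -/
def ParamRep (T : ℝ) (x : ℝ → ℝ) (u r : ℝ → ℝ) : Prop :=
  ContinuousOn u (Set.Icc 0 1) ∧ ContinuousOn r (Set.Icc 0 1) ∧
  (∀ s ∈ Set.Icc (0:ℝ) 1, (u s, r s) ∈ compGraph T x) ∧
  (∀ pt ∈ compGraph T x, ∃ s ∈ Set.Icc (0:ℝ) 1, (u s, r s) = pt) ∧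
  (∀ s₁ ∈ Set.Icc (0:ℝ) 1, ∀ s₂ ∈ Set.Icc (0:ℝ) 1, s₁ ≤ s₂ →
    graphLE x (u s₁, r s₁) (u s₂, r s₂))

/-- The Skorokhod M1 distance on `D([0,T];ℝ)`. -/
def dM1 (T : ℝ) (x y : ℝ → ℝ) : ℝ :=
  sInf {d : ℝ | ∃ u r v ρ : ℝ → ℝ, ParamRep T x u r ∧ ParamRep T y v ρ ∧
    d = max (sSup ((fun s => |u s - v s|) '' Set.Icc (0:ℝ) 1))
            (sSup ((fun s => |r s - ρ s|) '' Set.Icc (0:ℝ) 1))}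



/-- averages over `[t-1/n,t]` -/
def wzAvg (n : ℕ) (f : ℝ → ℝ) (t : ℝ) : ℝ := (n:ℝ) * ∫ s in (t - 1/(n:ℝ))..t, f s

lemma wzAvg_const (n : ℕ) (hn : 1 ≤ n) (c t : ℝ) : wzAvg n (fun _ => c) t = c := by
  have : (n:ℝ) ≠ 0 := by positivity
  simp [wzAvg]; field_simp

lemma wzAvg_add (n : ℕ) {f g : ℝ → ℝ} (hf : ∀ p q, IntervalIntegrable f volume p q)
    (hg : ∀ p q, IntervalIntegrable g volume p q) (t : ℝ) :
    wzAvg n (fun s => f s + g s) t = wzAvg n f t + wzAvg n g t := by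
  unfold wzAvg
  rw [intervalIntegral.integral_add (hf _ _) (hg _ _)]; ring

lemma wzAvg_smul (n : ℕ) (f : ℝ → ℝ) (c t : ℝ) :
    wzAvg n (fun s => c * f s) t = c * wzAvg n f t := by
  unfold wzAvg
  rw [intervalIntegral.integral_const_mul]; ring

lemma wzAvg_mono {n : ℕ} {f g : ℝ → ℝ} (hf : ∀ p q, IntervalIntegrable f volume p q)
    (hg : ∀ p q, IntervalIntegrable g volume p q) (t : ℝ)
    (h : ∀ s ∈ Icc (t - 1/(n:ℝ)) t, f s ≤ g s) : wzAvg n f t ≤ wzAvg n g t := by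
  unfold wzAvg
  have : t - 1/(n:ℝ) ≤ t := by
    have : 0 ≤ 1/(n:ℝ) := by positivity
    linarith
  exact mul_le_mul_of_nonneg_left
    (intervalIntegral.integral_mono_on this (hf _ _) (hg _ _) h) (by positivity)

lemma wzAvg_continuous (n : ℕ) {f : ℝ → ℝ} (hf : ∀ p q, IntervalIntegrable f volume p q) :
    Continuous (wzAvg n f) := by
  have h1 : Continuous (fun t => ∫ s in (0:ℝ)..t, f s) :=
    intervalIntegral.continuous_primitive hf 0
  have : wzAvg n f = fun t => (n:ℝ) * ((∫ s in (0:ℝ)..t, f s) - ∫ s in (0:ℝ)..(t - 1/(n:ℝ)), f s) := by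
    funext t
    unfold wzAvg
    rw [intervalIntegral.integral_interval_sub_left (hf _ _) (hf _ _)]
  rw [this]
  have h2 := h1.comp (continuous_id.sub continuous_const : Continuous (fun t : ℝ => t - 1/(n:ℝ)))
  exact continuous_const.mul (h1.sub h2)

lemma wzAvg_shift (n : ℕ) (f : ℝ → ℝ) (t h : ℝ) :
    wzAvg n (fun s => f (s + h)) t = wzAvg n f (t + h) := by
  unfold wzAvg
  rw [intervalIntegral.integral_comp_add_right]
  congr 2; ring

lemma wzAvg_tendsto {f : ℝ → ℝ} (hf : ∀ p q, IntervalIntegrable f volume p q) {r c : ℝ}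
    (h : Tendsto f (𝓝 r) (𝓝 c)) :
    Tendsto (fun p : ℕ × ℝ => wzAvg p.1 f p.2) (atTop ×ˢ 𝓝 r) (𝓝 c) := by
  rw [Metric.tendsto_nhds]
  intro ε hε
  obtain ⟨δ, hδ, hd⟩ := Metric.eventually_nhds_iff.1 (Metric.tendsto_nhds.1 h (ε/2) (by positivity))
  have e1 : ∀ᶠ n : ℕ in atTop, 1/(n:ℝ) < δ/2 :=
    (tendsto_one_div_atTop_nhds_zero_nat).eventually (gt_mem_nhds (by positivity))
  have e2 : ∀ᶠ t in 𝓝 r, dist t r < δ/2 := Metric.ball_mem_nhds r (by positivity)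
  filter_upwards [(e1.and (eventually_ge_atTop 1)).prod_mk e2]
  rintro ⟨n, t⟩ ⟨⟨h1, hn⟩, h2⟩
  simp only at h1 h2 hn ⊢
  have hn0 : (0:ℝ) < n := by positivity
  have key : wzAvg n f t - c = (n:ℝ) * ∫ s in (t - 1/(n:ℝ))..t, (f s - c) := by
    rw [intervalIntegral.integral_sub (hf _ _) (by simp)]
    have := wzAvg_const n hn c t
    unfold wzAvg at this ⊢
    linarith
  rw [Real.dist_eq, key, abs_mul, abs_of_pos hn0]
  have hp : 0 < 1/(n:ℝ) := by positivity
  have := intervalIntegral.norm_integral_le_of_norm_le_const (a := t - 1/(n:ℝ)) (b := t)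
    (f := fun s => f s - c) (C := ε/2) (by
      intro s hs
      rw [uIoc_of_le (by linarith)] at hs
      rw [Real.dist_eq, abs_lt] at h2
      have := @hd s (by rw [Real.dist_eq, abs_lt]; constructor <;> linarith [hs.1, hs.2])
      exact this.le)
  rw [Real.norm_eq_abs, sub_sub_cancel, abs_of_pos hp] at this
  calc _ ≤ (n:ℝ) * (ε/2 * (1/n)) := by gcongr
    _ = ε/2 := by field_simp
    _ < ε := by linarith

lemma wz_ind_int (r p q : ℝ) :
    IntervalIntegrable ((Ici r).indicator (fun _ => (1:ℝ))) volume p q := by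
  apply Monotone.intervalIntegrable
  intro a b hab
  simp only [indicator]
  split_ifs with h1 h2 <;> simp_all
  linarith

lemma wzAvg_jump {f : ℝ → ℝ} (hf : ∀ p q, IntervalIntegrable f volume p q) {r a b : ℝ}
    (hl : Tendsto f (𝓝[<] r) (𝓝 a)) (hr : Tendsto f (𝓝[≥] r) (𝓝 b)) :
    Tendsto (fun p : ℕ × ℝ => wzAvg p.1 f p.2 -
      (a + (b - a) * wzAvg p.1 ((Ici r).indicator (fun _ => (1:ℝ))) p.2))
      (atTop ×ˢ 𝓝 r) (𝓝 0) := by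
  set I := (Ici r).indicator (fun _ => (1:ℝ)) with hI
  have hIi := wz_ind_int r
  have hg : Tendsto (fun s => f s + ((-a) + (a - b) * I s)) (𝓝 r) (𝓝 0) := by
    rw [← nhdsLT_sup_nhdsGE r]
    refine Tendsto.sup ?_ ?_
    · have : Tendsto (fun s => f s + (-a)) (𝓝[<] r) (𝓝 (a + -a)) := hl.add_const _
      rw [add_neg_cancel] at this
      refine this.congr' ?_
      filter_upwards [self_mem_nhdsWithin] with s hs
      have : I s = 0 := by simp [hI, indicator]; simpa using hs
      simp [this]
    · have : Tendsto (fun s => f s + (-b)) (𝓝[≥] r) (𝓝 (b + -b)) := hr.add_const _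
      rw [add_neg_cancel] at this
      refine this.congr' ?_
      filter_upwards [self_mem_nhdsWithin] with s hs
      have : I s = 1 := by simp [hI, indicator]; simpa using hs
      simp only [this]; ring
  have hc : ∀ p q, IntervalIntegrable (fun _ : ℝ => -a) volume p q := by simp
  have hm : ∀ p q, IntervalIntegrable (fun s : ℝ => (a-b) * I s) volume p q :=
    fun p q => (hIi p q).const_mul _
  have := wzAvg_tendsto (fun p q => (hf p q).add ((hc p q).add (hm p q))) hg
  refine this.congr' ?_
  have e1 : ∀ᶠ p : ℕ × ℝ in atTop ×ˢ 𝓝 r, 1 ≤ p.1 := (eventually_ge_atTop 1).prod_inl _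
  filter_upwards [e1] with p hp
  rw [wzAvg_add _ hf (fun p q => ((hc p q).add (hm p q))), wzAvg_add _ hc hm, wzAvg_smul,
    wzAvg_const _ hp]
  ring

lemma wz_int {y yl : ℝ → ℝ} (hl : ∀ t, Tendsto y (𝓝[<] t) (𝓝 (yl t)))
    (hr : ∀ t, Tendsto y (𝓝[≥] t) (𝓝 (y t))) (p q : ℝ) : IntervalIntegrable y volume p q := by
  have hmeas : Measurable y := by
    refine measurable_of_tendsto_metrizable
      (f := fun (n : ℕ) t => y ((⌊((n:ℝ)+1) * t⌋ + 1 : ℝ) / ((n:ℝ)+1))) ?_ ?_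
    · intro n
      exact (measurable_from_top (f := fun k : ℤ => y ((k + 1 : ℝ) / ((n:ℝ)+1)))).comp
        (Int.measurable_floor.comp (measurable_const_mul _))
    · rw [tendsto_pi_nhds]
      intro t
      refine (hr t).comp (tendsto_nhdsWithin_iff.2 ⟨?_, ?_⟩)
      · have h0 : Tendsto (fun n : ℕ => t + 1/((n:ℝ)+1)) atTop (𝓝 t) := by
          simpa using tendsto_one_div_add_atTop_nhds_zero_nat.const_add t
        refine tendsto_of_tendsto_of_tendsto_of_le_of_le tendsto_const_nhds h0 ?_ ?_
        · intro n
          have : (0:ℝ) < n + 1 := by positivity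
          have := Int.lt_floor_add_one (((n:ℝ)+1) * t)
          simp only
          rw [le_div_iff₀ (by assumption)]; linarith
        · intro n
          have : (0:ℝ) < n + 1 := by positivity
          have := Int.floor_le (((n:ℝ)+1) * t)
          simp only
          rw [div_le_iff₀ (by assumption)]; field_simp; linarith
      · refine Eventually.of_forall fun n => ?_
        have : (0:ℝ) < n + 1 := by positivity
        have := Int.lt_floor_add_one (((n:ℝ)+1) * t)
        rw [mem_Ici, le_div_iff₀ (by assumption)]; linarith
  have : LocallyIntegrable y volume := by
    intro t
    rw [← nhdsLT_sup_nhdsGE t, IntegrableAtFilter.sup_iff]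
    constructor
    · exact (Measure.finiteAt_nhdsWithin _ _ _).integrableAtFilter_of_tendsto
        hmeas.stronglyMeasurable.stronglyMeasurableAtFilter (hl t)
    · exact (Measure.finiteAt_nhdsWithin _ _ _).integrableAtFilter_of_tendsto
        hmeas.stronglyMeasurable.stronglyMeasurableAtFilter (hr t)
  exact (this.integrableOn_isCompact isCompact_uIcc).intervalIntegrable

lemma wz_countable {y yl : ℝ → ℝ} (hl : ∀ t, Tendsto y (𝓝[<] t) (𝓝 (yl t)))
    (hr : ∀ t, Tendsto y (𝓝[≥] t) (𝓝 (y t))) : {t | yl t ≠ y t}.Countable := by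
  have hS : ∀ k : ℕ, {t | 1/((k:ℝ)+1) < |y t - yl t|}.Countable := by
    intro k
    have hk : 0 < 1/((k:ℝ)+1) := by positivity
    set e := 1/((k:ℝ)+1)
    have main : ∀ t : ℝ, ∀ᶠ s in 𝓝 t, s ≠ t → |y s - yl s| ≤ e := by
      have gen : ∀ (c : ℝ) (U : Set ℝ), IsOpen U → (∀ s ∈ U, |y s - c| < e/2) →
          ∀ s ∈ U, |y s - yl s| ≤ e := by
        intro c U hU h s hs
        have : |yl s - c| ≤ e/2 := by
          refine le_of_tendsto ((hl s).sub_const c).abs ?_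
          filter_upwards [nhdsWithin_le_nhds (hU.mem_nhds hs)] with z hz
          exact (h z hz).le
        have h2 := (h s hs).le
        rw [abs_le] at *
        constructor <;> linarith [this.1, this.2, h2.1, h2.2]
      intro t
      have h1 : ∀ᶠ s in 𝓝[<] t, |y s - yl t| < e/2 :=
        Metric.tendsto_nhds.1 (hl t) _ (by positivity)
      have h2 : ∀ᶠ s in 𝓝[>] t, |y s - y t| < e/2 :=
        Metric.tendsto_nhds.1 ((hr t).mono_left (nhdsWithin_mono _ Ioi_subset_Ici_self)) _
          (by positivity)
      obtain ⟨a, ha, ha'⟩ := (mem_nhdsLT_iff_exists_Ioo_subset).1 h1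
      obtain ⟨b, hb, hb'⟩ := (mem_nhdsGT_iff_exists_Ioo_subset).1 h2
      filter_upwards [Ioo_mem_nhds ha hb] with s hs hne
      rcases lt_or_gt_of_ne hne with h | h
      · exact gen _ _ isOpen_Ioo ha' s ⟨hs.1, h⟩
      · exact gen _ _ isOpen_Ioo hb' s ⟨h, hs.2⟩
    obtain ⟨s, hs, hu⟩ := TopologicalSpace.countable_cover_nhds main
    refine hs.mono ?_
    intro t ht
    have : t ∈ ⋃ i ∈ s, {x | x ≠ i → |y x - yl x| ≤ e} := by
      have h3 : t ∈ (univ : Set ℝ) := mem_univ _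
      rw [← hu] at h3; exact h3
    simp only [mem_iUnion] at this
    obtain ⟨i, hi, h⟩ := this
    by_contra hc
    have : t ≠ i := by rintro rfl; exact hc hi
    exact absurd (h this) (not_le.2 ht)
  refine (countable_iUnion hS).mono ?_
  intro t ht
  have : 0 < |y t - yl t| := abs_pos.2 (sub_ne_zero.2 (Ne.symm ht))
  obtain ⟨k, hk⟩ := exists_nat_one_div_lt this
  exact mem_iUnion.2 ⟨k, hk⟩

lemma wz_uniform {F : ℕ → ℝ → ℝ} {u : ℝ → ℝ}
    (h : ∀ σ, Tendsto (fun p : ℕ × ℝ => F p.1 p.2) (atTop ×ˢ 𝓝 σ) (𝓝 (u σ))) :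
    Continuous u ∧ ∀ a b ε : ℝ, 0 < ε → ∀ᶠ n in atTop, ∀ σ ∈ Icc a b, |F n σ - u σ| < ε := by
  have hpt : ∀ σ, Tendsto (fun n => F n σ) atTop (𝓝 (u σ)) := fun σ =>
    (h σ).comp (tendsto_id.prodMk (tendsto_const_nhds (x := σ)))
  have hc : Continuous u := by
    rw [continuous_iff_continuousAt]
    intro σ
    rw [ContinuousAt, Metric.tendsto_nhds]
    intro ε hε
    obtain ⟨pa, ha, pb, hb, hab⟩ := eventually_prod_iff.1 (Metric.tendsto_nhds.1 (h σ) (ε/2) (by positivity))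
    filter_upwards [hb] with τ hτ
    have : dist (u τ) (u σ) ≤ ε/2 := by
      refine le_of_tendsto ((hpt τ).dist tendsto_const_nhds) ?_
      filter_upwards [ha] with n hn
      exact (hab hn hτ).le
    linarith
  refine ⟨hc, fun a b ε hε => ?_⟩
  have hloc : TendstoLocallyUniformlyOn F u atTop (Icc a b) := by
    rw [Metric.tendstoLocallyUniformlyOn_iff]
    intro ε hε σ _
    obtain ⟨pa, ha, pb, hb, hab⟩ := eventually_prod_iff.1 (Metric.tendsto_nhds.1 (h σ) (ε/2) (by positivity))
    have hb2 := Metric.tendsto_nhds.1 (hc.tendsto σ) (ε/2) (by positivity)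
    refine ⟨_, nhdsWithin_le_nhds (hb.and hb2), ?_⟩
    filter_upwards [ha] with n hn τ hτ
    have h1 := hab hn hτ.1
    have h2 := hτ.2
    have := dist_triangle_right (u τ) (F n τ) (u σ)
    simp only at h1 
    linarith
  have := (tendstoLocallyUniformlyOn_iff_tendstoUniformlyOn_of_compact isCompact_Icc).1 hloc
  filter_upwards [Metric.tendstoUniformlyOn_iff.1 this ε hε] with n hn σ hσ
  have := hn σ hσ
  rwa [dist_comm, Real.dist_eq] at this

/-- strictly increasing time change with jumps -/
structure WZTime (φ φl : ℝ → ℝ) : Prop where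
  inc : ∀ s t, s ≤ t → φ s + (t - s) ≤ φ t
  lb : ∀ t, t ≤ φ t
  ub : ∀ t, φ t ≤ t + 1
  left : ∀ t, Tendsto φ (𝓝[<] t) (𝓝 (φl t))
  right : ∀ t, Tendsto φ (𝓝[≥] t) (𝓝 (φ t))

lemma wz_time_exists {D : Set ℝ} (hD : D.Countable) :
    ∃ φ φl : ℝ → ℝ, WZTime φ φl ∧ ∀ t ∈ D, φl t < φ t := by
  obtain ⟨d, hd⟩ := (hD.insert 0).exists_eq_range (insert_nonempty 0 D)
  let ν : Measure ℝ := Measure.sum (fun i : ℕ => Measure.dirac (d i))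
  have hν : ∀ i, ν {d i} ≠ 0 := by
    intro i h0
    have h1 : Measure.dirac (d i) {d i} ≤ ν {d i} := Measure.le_sum (fun i : ℕ => Measure.dirac (d i)) i _
    rw [h0] at h1
    simp at h1
  have : NeZero ν := ⟨by intro h; apply hν 0; simp [h]⟩
  let μ := ν.toFinite
  have : IsProbabilityMeasure μ := inferInstance
  let J := ProbabilityTheory.cdf μ
  have hJ : Monotone J := J.mono
  refine ⟨fun t => t + J t, fun t => t + Function.leftLim J t, ⟨?_, ?_, ?_, ?_, ?_⟩, ?_⟩
  · intro s t hst
    have := hJ hst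
    linarith
  · intro t
    have := ProbabilityTheory.cdf_nonneg μ t
    simp only [J]; linarith
  · intro t
    have := ProbabilityTheory.cdf_le_one μ t
    simp only [J]; linarith
  · intro t
    exact (tendsto_id.mono_left nhdsWithin_le_nhds).add (hJ.tendsto_leftLim t)
  · intro t
    exact (tendsto_id.mono_left nhdsWithin_le_nhds).add (J.right_continuous t)
  · intro t ht
    have : t ∈ range d := by rw [← hd]; exact mem_insert_of_mem _ ht
    obtain ⟨i, rfl⟩ := this
    have h1 : μ {d i} ≠ 0 := fun h => hν i (toFinite_apply_eq_zero_iff.1 h)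
    rw [← ProbabilityTheory.measure_cdf μ, StieltjesFunction.measure_singleton] at h1
    have : 0 < J (d i) - Function.leftLim J (d i) := by
      by_contra hc
      exact h1 (ENNReal.ofReal_eq_zero.2 (not_lt.1 hc))
    simp only; linarith

namespace WZTime

variable {φ φl : ℝ → ℝ}

lemma lt_left (h : WZTime φ φl) {s t : ℝ} (hst : s < t) : φ s < φl t := by
  have h1 : Tendsto (fun z => φ z - z) (𝓝[<] t) (𝓝 (φl t - t)) :=
    (h.left t).sub (tendsto_id.mono_left nhdsWithin_le_nhds)
  have : φ s - s ≤ φl t - t := by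
    refine ge_of_tendsto h1 ?_
    filter_upwards [Ioo_mem_nhdsLT hst] with z hz
    linarith [h.inc s z hz.1.le]
  linarith

lemma left_le (h : WZTime φ φl) (t : ℝ) : φl t ≤ φ t := by
  refine le_of_tendsto (h.left t) ?_
  filter_upwards [self_mem_nhdsWithin] with z hz
  have hz : z < t := hz
  linarith [h.inc z t hz.le]

lemma lb_left (h : WZTime φ φl) (t : ℝ) : t ≤ φl t := by
  refine le_of_tendsto_of_tendsto (tendsto_id.mono_left nhdsWithin_le_nhds) (h.left t) ?_
  exact Eventually.of_forall h.lb

lemma mono (h : WZTime φ φl) : Monotone φ := fun s t hst => by linarith [h.inc s t hst]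

lemma int (h : WZTime φ φl) (p q : ℝ) : IntervalIntegrable φ volume p q :=
  h.mono.intervalIntegrable

lemma exists_inv (h : WZTime φ φl) (σ : ℝ) : ∃ r, φl r ≤ σ ∧ σ ≤ φ r := by
  set S := {t | σ ≤ φ t}
  have hne : S.Nonempty := ⟨σ, h.lb σ⟩
  have hbd : BddBelow S := ⟨σ - 1, fun t ht => by
    have h1 : σ ≤ φ t := ht
    linarith [h.ub t]⟩
  refine ⟨sInf S, ?_, ?_⟩
  · refine le_of_tendsto (h.left _) ?_
    filter_upwards [self_mem_nhdsWithin] with z hz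
    by_contra hc
    exact absurd (csInf_le hbd (show z ∈ S from (not_le.1 hc).le)) (not_le.2 hz)
  · refine ge_of_tendsto ((h.right (sInf S)).mono_left (nhdsWithin_mono _ Ioi_subset_Ici_self)) ?_
    filter_upwards [self_mem_nhdsWithin] with z hz
    obtain ⟨t, ht, htz⟩ := exists_lt_of_csInf_lt hne hz
    exact le_trans ht (h.mono htz.le)

lemma inv_mono (h : WZTime φ φl) {r r' σ σ' : ℝ} (h1 : φl r ≤ σ) (h2 : σ' ≤ φ r')
    (hs : σ ≤ σ') : r ≤ r' := by
  by_contra hc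
  linarith [h.lt_left (not_le.1 hc)]

lemma avg_inv (h : WZTime φ φl) {n : ℕ} (hn : 1 ≤ n) :
    ∃ R : ℝ → ℝ, Continuous R ∧ Monotone R ∧ ∀ σ, wzAvg n φ (R σ) = σ := by
  have hc := wzAvg_continuous n h.int
  have hub : ∀ t, wzAvg n φ t ≤ t + 1 := fun t => by
    have := wzAvg_mono (n := n) h.int (g := fun _ => t + 1) (by simp) t
      (fun s hs => by linarith [h.ub s, hs.2])
    rwa [wzAvg_const n hn] at this
  have hn' : 1/(n:ℝ) ≤ 1 := by
    rw [div_le_one (by positivity)]; exact_mod_cast hn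
  have hlb : ∀ t, t - 1 ≤ wzAvg n φ t := fun t => by
    have := wzAvg_mono (n := n) (f := fun _ => t - 1) (by simp) h.int t
      (fun s hs => by linarith [h.lb s, hs.1])
    rwa [wzAvg_const n hn] at this
  have hs : StrictMono (wzAvg n φ) := by
    intro s t hst
    have e : wzAvg n φ t = wzAvg n (fun z => φ (z + (t - s))) s := by
      rw [wzAvg_shift]; congr 1; ring
    have hm : Monotone (fun z => φ (z + (t-s))) := fun a b hab => h.mono (by linarith)
    have := wzAvg_mono (n := n) (f := fun z => φ z + (t - s)) (g := fun z => φ (z + (t - s)))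
      (fun p q => (h.int p q).add (by simp)) (fun p q => hm.intervalIntegrable) s
      (fun z _ => by have := h.inc z (z + (t-s)) (by linarith); linarith)
    rw [wzAvg_add n h.int (by simp), wzAvg_const n hn, ← e] at this
    linarith
  have hsurj : Function.Surjective (wzAvg n φ) := by
    refine hc.surjective ?_ ?_
    · exact tendsto_atTop_mono hlb (tendsto_atTop_add_const_right _ (-1) tendsto_id)
    · exact tendsto_atBot_mono hub (tendsto_atBot_add_const_right _ 1 tendsto_id)
  let e := hs.orderIsoOfSurjective _ hsurj
  refine ⟨e.symm, e.symm.continuous, e.symm.monotone, fun σ => e.apply_symm_apply σ⟩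

lemma avg_bd (h : WZTime φ φl) {n : ℕ} (hn : 1 ≤ n) (t : ℝ) :
    φ (t - 1/(n:ℝ)) ≤ wzAvg n φ t ∧ wzAvg n φ t ≤ φ t := by
  constructor
  · have := wzAvg_mono (n := n) (f := fun _ => φ (t - 1/(n:ℝ))) (by simp) h.int t
      (fun s hs => h.mono hs.1)
    rwa [wzAvg_const n hn] at this
  · have := wzAvg_mono (n := n) (g := fun _ => φ t) h.int (by simp) t
      (fun s hs => h.mono hs.2)
    rwa [wzAvg_const n hn] at this

lemma inv_close (h : WZTime φ φl) {n : ℕ} (hn : 1 ≤ n) {t r σ : ℝ} (ht : wzAvg n φ t = σ)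
    (h1 : φl r ≤ σ) (h2 : σ ≤ φ r) : |t - r| ≤ 1/(n:ℝ) := by
  obtain ⟨h3, h4⟩ := h.avg_bd hn t
  have hp : 0 ≤ 1/(n:ℝ) := by positivity
  rw [abs_le]
  constructor
  · by_contra hc
    have := h.lt_left (show t < r by linarith)
    linarith
  · by_contra hc
    have := h.lt_left (show r < t - 1/(n:ℝ) by linarith)
    linarith [h.left_le (t - 1/(n:ℝ))]

end WZTime

/-- projection on `[0,T]` -/
def wzClamp (T t : ℝ) : ℝ := max 0 (min t T)

lemma wzClamp_cont (T : ℝ) : Continuous (wzClamp T) := by unfold wzClamp; fun_prop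

lemma wzClamp_mono (T : ℝ) : Monotone (wzClamp T) := fun _ _ h =>
  max_le_max le_rfl (min_le_min h le_rfl)

lemma wzClamp_mem {T : ℝ} (hT : 0 < T) (t : ℝ) : wzClamp T t ∈ Icc 0 T :=
  ⟨le_max_left _ _, max_le hT.le (min_le_right _ _)⟩

lemma wzClamp_of_mem {T t : ℝ} (h : t ∈ Icc 0 T) : wzClamp T t = t := by
  unfold wzClamp; rw [min_eq_left h.2, max_eq_right h.1]

lemma wzClamp_of_le {T t : ℝ} (h : t ≤ 0) : wzClamp T t = 0 := by
  unfold wzClamp; rw [max_eq_left ((min_le_left _ _).trans h)]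

lemma wzClamp_of_ge {T t : ℝ} (hT : 0 < T) (h : T ≤ t) : wzClamp T t = T := by
  unfold wzClamp; rw [min_eq_right h, max_eq_right hT.le]

lemma wzClamp_lip (T s t : ℝ) : |wzClamp T s - wzClamp T t| ≤ |s - t| := by
  unfold wzClamp
  rw [max_comm 0, max_comm 0]
  refine (abs_max_sub_max_le_abs _ _ _).trans ?_
  have := abs_min_sub_min_le_max s T t T
  simpa using this

lemma wz_y_eq {T : ℝ} {x : ℝ → ℝ} (hext : ∀ s < (0:ℝ), x s = x 0) {s : ℝ} (hs : s ≤ T) :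
    x (wzClamp T s) = x s := by
  rcases lt_or_ge s 0 with h | h
  · rw [wzClamp_of_le h.le, hext s h]
  · rw [wzClamp_of_mem ⟨h, hs⟩]

lemma wz_leftVal_T {T : ℝ} (hT : 0 < T) {x : ℝ → ℝ}
    (hxT : Tendsto x (𝓝[<] T) (𝓝 (x T))) : leftVal x T = x T := by
  rw [leftVal, if_neg (not_le.2 hT)]
  exact leftLim_eq_of_tendsto hxT

lemma wz_left {T : ℝ} (hT : 0 < T) {x : ℝ → ℝ} (hx : Cadlag T x)
    (hxT : Tendsto x (𝓝[<] T) (𝓝 (x T))) (hext : ∀ s < (0:ℝ), x s = x 0) (t : ℝ) :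
    Tendsto (fun s => x (wzClamp T s)) (𝓝[<] t) (𝓝 (leftVal x (wzClamp T t))) := by
  rcases le_or_gt t 0 with h | h
  · rw [wzClamp_of_le h, leftVal, if_pos le_rfl]
    refine tendsto_const_nhds.congr' ?_
    filter_upwards [self_mem_nhdsWithin] with s hs
    have hs : s < t := hs
    rw [wzClamp_of_le (by linarith)]
  rcases le_or_gt t T with h' | h'
  · rw [wzClamp_of_mem ⟨h.le, h'⟩, leftVal, if_neg (not_le.2 h)]
    obtain ⟨L, hL⟩ := hx.2 t ⟨h, h'⟩
    rw [leftLim_eq_of_tendsto hL]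
    refine hL.congr' ?_
    filter_upwards [self_mem_nhdsWithin] with s hs
    have hs : s < t := hs
    rw [wz_y_eq hext (by linarith)]
  · rw [wzClamp_of_ge hT h'.le, wz_leftVal_T hT hxT]
    refine tendsto_const_nhds.congr' ?_
    filter_upwards [Ioo_mem_nhdsLT h'] with s hs
    rw [wzClamp_of_ge hT hs.1.le]

lemma wz_right {T : ℝ} (hT : 0 < T) {x : ℝ → ℝ} (hx : Cadlag T x)
    (hext : ∀ s < (0:ℝ), x s = x 0) (t : ℝ) :
    Tendsto (fun s => x (wzClamp T s)) (𝓝[≥] t) (𝓝 (x (wzClamp T t))) := by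
  rcases lt_or_ge t 0 with h | h
  · rw [wzClamp_of_le h.le]
    refine tendsto_const_nhds.congr' ?_
    filter_upwards [Ico_mem_nhdsGE h] with s hs
    rw [wzClamp_of_le hs.2.le]
  rcases lt_or_ge t T with h' | h'
  · rw [wz_y_eq hext h'.le]
    refine (hx.1 t ⟨h, h'⟩).congr' ?_
    filter_upwards [Ico_mem_nhdsGE h'] with s hs
    rw [wz_y_eq hext hs.2.le]
  · rw [wzClamp_of_ge hT h']
    refine tendsto_const_nhds.congr' ?_
    filter_upwards [self_mem_nhdsWithin] with s hs
    have hs : t ≤ s := hs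
    rw [wzClamp_of_ge hT (by linarith)]

lemma wz_paramRep_cont {T : ℝ} {f ρ : ℝ → ℝ} (hf : ContinuousOn f (Icc 0 T))
    (hρ : Continuous ρ) (hm : Monotone ρ) (h0 : ρ 0 = 0) (h1 : ρ 1 = T)
    (hmem : ∀ s, ρ s ∈ Icc 0 T) : ParamRep T f (fun s => f (ρ s)) ρ := by
  have hlv : ∀ t ∈ Icc 0 T, leftVal f t = f t := by
    intro t ht
    unfold leftVal
    split_ifs with h
    · rw [le_antisymm h ht.1]
    · push Not at h
      apply leftLim_eq_of_tendsto
      have := (hf t ht).mono_left (nhdsWithin_mono t (show Ioo 0 t ⊆ Icc 0 T from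
        fun s hs => ⟨hs.1.le, hs.2.le.trans ht.2⟩))
      rwa [nhdsWithin_Ioo_eq_nhdsLT h] at this
  refine ⟨?_, hρ.continuousOn, ?_, ?_, ?_⟩
  · exact (hf.comp_continuous hρ hmem).continuousOn
  · intro s _
    refine ⟨hmem s, 0, by simp, ?_⟩
    simp
  · rintro ⟨z, t⟩ ⟨ht, c, hc, hz⟩
    simp only at ht hz
    rw [hlv t ht] at hz
    have : t ∈ Icc (ρ 0) (ρ 1) := by rwa [h0, h1]
    obtain ⟨s, hs, rfl⟩ := intermediate_value_Icc zero_le_one hρ.continuousOn this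
    refine ⟨s, hs, ?_⟩
    rw [hz]; congr 1; ring
  · intro s₁ _ s₂ _ h
    rcases (hm h).lt_or_eq with h | h
    · exact Or.inl h
    · refine Or.inr ⟨h, ?_⟩
      simp only [h]; exact le_rfl

/-- fraction of a jump -/
def wzLam (φ φl : ℝ → ℝ) (r σ : ℝ) : ℝ := (σ - φl r) / (φ r - φl r)

lemma wzLam_mem {φ φl : ℝ → ℝ} {r σ : ℝ} (h1 : φl r ≤ σ) (h2 : σ ≤ φ r) :
    wzLam φ φl r σ ∈ Icc 0 1 := by
  unfold wzLam
  exact ⟨div_nonneg (by linarith) (by linarith), div_le_one_of_le₀ (by linarith) (by linarith)⟩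

lemma wzLam_mono {φ φl : ℝ → ℝ} {r σ τ : ℝ} (h : φl r ≤ φ r) (hs : σ ≤ τ) :
    wzLam φ φl r σ ≤ wzLam φ φl r τ := by
  unfold wzLam
  exact div_le_div_of_nonneg_right (by linarith) (by linarith)

/-- Parametric representation of the limit -/
def wzU (T : ℝ) (x φ φl R : ℝ → ℝ) (σ : ℝ) : ℝ :=
  leftVal x (wzClamp T (R σ)) + (x (wzClamp T (R σ)) - leftVal x (wzClamp T (R σ))) *
    wzLam φ φl (R σ) σ

lemma wz_conv {T : ℝ} (hT : 0 < T) {x : ℝ → ℝ} (hx : Cadlag T x)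
    (hxT : Tendsto x (𝓝[<] T) (𝓝 (x T))) (hext : ∀ s < (0:ℝ), x s = x 0)
    {φ φl R : ℝ → ℝ} {Rn : ℕ → ℝ → ℝ} (hφ : WZTime φ φl)
    (hD : ∀ t, leftVal x (wzClamp T t) ≠ x (wzClamp T t) → φl t < φ t)
    (hR : ∀ σ, φl (R σ) ≤ σ ∧ σ ≤ φ (R σ)) (hRc : Continuous R)
    (hRn : ∀ n, 1 ≤ n → ∀ σ, wzAvg n φ (Rn n σ) = σ) (σ₀ : ℝ) :
    Tendsto (fun p : ℕ × ℝ => wzAvg p.1 (fun s => x (wzClamp T s)) (wzClamp T (Rn p.1 p.2)))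
      (atTop ×ˢ 𝓝 σ₀) (𝓝 (wzU T x φ φl R σ₀)) := by
  have hl := wz_left hT hx hxT hext
  have hr := wz_right hT hx hext
  have hint := wz_int (y := fun s => x (wzClamp T s)) (yl := fun s => leftVal x (wzClamp T s)) hl hr
  have e1 : ∀ᶠ p : ℕ × ℝ in atTop ×ˢ 𝓝 σ₀, 1 ≤ p.1 := (eventually_ge_atTop 1).prod_inl _
  have t1 : Tendsto (fun p : ℕ × ℝ => p.1) (atTop ×ˢ 𝓝 σ₀) atTop := tendsto_fst
  have t2 : Tendsto (fun p : ℕ × ℝ => p.2) (atTop ×ˢ 𝓝 σ₀) (𝓝 σ₀) := tendsto_snd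
  have hRt : Tendsto (fun p : ℕ × ℝ => Rn p.1 p.2) (atTop ×ˢ 𝓝 σ₀) (𝓝 (R σ₀)) := by
    have h1 : Tendsto (fun p : ℕ × ℝ => Rn p.1 p.2 - R p.2) (atTop ×ˢ 𝓝 σ₀) (𝓝 0) := by
      refine squeeze_zero_norm' ?_ (tendsto_one_div_atTop_nhds_zero_nat.comp t1)
      filter_upwards [e1] with p hp
      exact hφ.inv_close hp (hRn _ hp _) (hR _).1 (hR _).2
    have h2 := h1.add ((hRc.tendsto σ₀).comp t2)
    simpa using h2
  set r := R σ₀ with hrdef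
  by_cases hc : leftVal x (wzClamp T r) = x (wzClamp T r)
  · have hu : wzU T x φ φl R σ₀ = x (wzClamp T r) := by
      unfold wzU; rw [← hrdef, hc]; ring
    rw [hu]
    have hcc : wzClamp T (wzClamp T r) = wzClamp T r := wzClamp_of_mem (wzClamp_mem hT r)
    have hcont : Tendsto (fun s => x (wzClamp T s)) (𝓝 (wzClamp T r)) (𝓝 (x (wzClamp T r))) := by
      rw [← nhdsLT_sup_nhdsGE]
      refine Tendsto.sup ?_ ?_
      · have := hl (wzClamp T r); rwa [hcc, hc] at this
      · have := hr (wzClamp T r); rwa [hcc] at this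
    have := wzAvg_tendsto hint hcont
    exact this.comp (t1.prodMk (((wzClamp_cont T).tendsto r).comp hRt))
  · have hlt := hD r hc
    have h0 : 0 < r := by
      by_contra h
      apply hc
      rw [wzClamp_of_le (not_lt.1 h), leftVal, if_pos le_rfl]
    have h1 : r < T := by
      by_contra h
      apply hc
      rw [wzClamp_of_ge hT (not_lt.1 h), wz_leftVal_T hT hxT]
    have e2 : ∀ᶠ p : ℕ × ℝ in atTop ×ˢ 𝓝 σ₀, Rn p.1 p.2 ∈ Ioo 0 T :=
      hRt.eventually (Ioo_mem_nhds h0 h1)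
    have hjx := (wzAvg_jump hint (hl r) (hr r)).comp (t1.prodMk hRt)
    have hjφ := (wzAvg_jump hφ.int (hφ.left r) (hφ.right r)).comp (t1.prodMk hRt)
    set Λ : ℕ × ℝ → ℝ := fun p =>
      wzAvg p.1 ((Ici r).indicator (fun _ => (1:ℝ))) (Rn p.1 p.2) with hΛ
    have hΛt : Tendsto Λ (atTop ×ˢ 𝓝 σ₀) (𝓝 (wzLam φ φl r σ₀)) := by
      have h3 := ((t2.sub hjφ).sub_const (φl r)).div_const (φ r - φl r)
      rw [sub_zero] at h3
      refine h3.congr' ?_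
      filter_upwards [e1] with p hp
      simp only [Function.comp, hRn p.1 hp, hΛ]
      field_simp [(sub_pos.2 hlt).ne']
      ring
    have h4 := hjx.add ((hΛt.const_mul (x (wzClamp T r) - leftVal x (wzClamp T r))).const_add
      (leftVal x (wzClamp T r)))
    rw [zero_add] at h4
    refine h4.congr' ?_
    filter_upwards [e2] with p hp
    rw [wzClamp_of_mem ⟨hp.1.le, hp.2.le⟩]
    simp only [Function.comp, hΛ]
    ring

lemma wz_paramRep_lim {T : ℝ} (hT : 0 < T) {x : ℝ → ℝ}
    (hxT : Tendsto x (𝓝[<] T) (𝓝 (x T)))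
    {φ φl R : ℝ → ℝ} (hφ : WZTime φ φl)
    (hD : ∀ t, leftVal x (wzClamp T t) ≠ x (wzClamp T t) → φl t < φ t)
    (hR : ∀ σ, φl (R σ) ≤ σ ∧ σ ≤ φ (R σ)) (hRc : Continuous R)
    (huc : Continuous (wzU T x φ φl R)) :
    ParamRep T x (fun s => wzU T x φ φl R (-1 + (T + 2) * s))
      (fun s => wzClamp T (R (-1 + (T + 2) * s))) := by
  have haff : Continuous (fun s : ℝ => -1 + (T + 2) * s) := by fun_prop
  refine ⟨(huc.comp haff).continuousOn, ((wzClamp_cont T).comp (hRc.comp haff)).continuousOn,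
    ?_, ?_, ?_⟩
  · intro s _
    set σ := -1 + (T + 2) * s
    have hm := wzLam_mem (hR σ).1 (hR σ).2
    refine ⟨wzClamp_mem hT _, 1 - wzLam φ φl (R σ) σ, ⟨by linarith [hm.2], by linarith [hm.1]⟩, ?_⟩
    simp only [wzU]; ring
  · rintro ⟨z, t⟩ ⟨ht, c, hc, hz⟩
    simp only at ht hz
    have hle := hφ.left_le t
    set σ := c * φl t + (1 - c) * φ t with hσ
    have h1 : φl t ≤ σ := by nlinarith [hc.1, hc.2]
    have h2 : σ ≤ φ t := by nlinarith [hc.1, hc.2]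
    have hRt : R σ = t := le_antisymm (hφ.inv_mono (hR σ).1 h2 le_rfl)
      (hφ.inv_mono h1 (hR σ).2 le_rfl)
    have hb1 := hφ.lb_left t
    have hb2 := hφ.ub t
    refine ⟨(σ + 1) / (T + 2), ⟨div_nonneg (by linarith [ht.1]) (by linarith),
      div_le_one_of_le₀ (by linarith [ht.2]) (by linarith)⟩, ?_⟩
    have hs : -1 + (T + 2) * ((σ + 1) / (T + 2)) = σ := by
      have : T + 2 ≠ 0 := by linarith
      field_simp; ring
    simp only [hs, hRt, wzClamp_of_mem ht, hz]
    congr 1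
    unfold wzU
    rw [hRt, wzClamp_of_mem ht]
    by_cases hj : leftVal x t = x t
    · rw [hj]; ring
    · have hlt := hD t (by rwa [wzClamp_of_mem ht])
      have : wzLam φ φl t σ = 1 - c := by
        unfold wzLam
        rw [div_eq_iff (sub_pos.2 hlt).ne', hσ]; ring
      rw [this]; ring
  · intro s₁ _ s₂ _ h
    have hσ : -1 + (T + 2) * s₁ ≤ -1 + (T + 2) * s₂ := by nlinarith
    simp only
    generalize -1 + (T + 2) * s₁ = σ at hσ
    generalize -1 + (T + 2) * s₂ = τ at hσ
    have hRm : R σ ≤ R τ := hφ.inv_mono (hR σ).1 (hR τ).2 hσ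
    rcases (wzClamp_mono T hRm).lt_or_eq with h | h
    · exact Or.inl h
    · refine Or.inr ⟨h, ?_⟩
      simp only [wzU, ← h, add_sub_cancel_left, abs_mul]
      rcases hRm.lt_or_eq with h' | h'
      · have : x (wzClamp T (R σ)) - leftVal x (wzClamp T (R σ)) = 0 := by
          rcases le_or_gt (R σ) 0 with h0 | h0
          · rw [wzClamp_of_le h0, leftVal, if_pos le_rfl, sub_self]
          rcases lt_or_ge (R σ) T with h1 | h1
          · exfalso
            rw [wzClamp_of_mem ⟨h0.le, h1.le⟩] at h
            rcases le_or_gt (R τ) T with h2 | h2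
            · rw [wzClamp_of_mem ⟨by linarith, h2⟩] at h; linarith
            · rw [wzClamp_of_ge hT h2.le] at h; linarith
          · rw [wzClamp_of_ge hT h1, wz_leftVal_T hT hxT, sub_self]
        simp [this]
      · have h3 := wzLam_mem (hR σ).1 (hR σ).2
        have h4 := wzLam_mem (hR τ).1 (hR τ).2
        rw [abs_of_nonneg h3.1, abs_of_nonneg h4.1, ← h']
        exact mul_le_mul_of_nonneg_left (wzLam_mono (hφ.left_le _) hσ) (abs_nonneg _)

/-- the Wong–Zakai averaging approximations
`xₙ(t) = n ∫_{t−1/n}^t x(s) ds` of a càdlàg path `x` on `[0,T]` (continuous at `T`,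
extended by `x(s) := x(0)` for `s < 0`) are continuous and converge to `x` in the
Skorokhod M1 topology; in particular every càdlàg path is an M1-limit of absolutely
continuous paths. -/
theorem wong_zakai_M1_convergence
    (T : ℝ) (hT : 0 < T) (x : ℝ → ℝ)
    (hx : Cadlag T x)
    (hxT : Filter.Tendsto x (nhdsWithin T (Set.Iio T)) (nhds (x T)))
    (hext : ∀ s < (0:ℝ), x s = x 0) :
    (∀ n : ℕ, 1 ≤ n →
      ContinuousOn (fun t => (n:ℝ) * ∫ s in (t - 1/(n:ℝ))..t, x s) (Set.Icc 0 T)) ∧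
    Filter.Tendsto
      (fun n : ℕ => dM1 T (fun t => (n:ℝ) * ∫ s in (t - 1/(n:ℝ))..t, x s) x)
      Filter.atTop (nhds 0) := by
  have hl := wz_left hT hx hxT hext
  have hr := wz_right hT hx hext
  have hint := wz_int (y := fun s => x (wzClamp T s)) (yl := fun s => leftVal x (wzClamp T s)) hl hr
  have heq : ∀ n : ℕ, EqOn (fun t => (n:ℝ) * ∫ s in (t - 1/(n:ℝ))..t, x s)
      (wzAvg n (fun s => x (wzClamp T s))) (Icc 0 T) := by
    intro n t ht
    have hp : 0 ≤ 1/(n:ℝ) := by positivity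
    simp only [wzAvg]
    congr 1
    refine intervalIntegral.integral_congr ?_
    intro s hs
    rw [uIcc_of_le (by linarith)] at hs
    exact (wz_y_eq hext (hs.2.trans ht.2)).symm
  have hcont : ∀ n : ℕ,
      ContinuousOn (fun t => (n:ℝ) * ∫ s in (t - 1/(n:ℝ))..t, x s) (Set.Icc 0 T) := fun n =>
    (wzAvg_continuous n hint).continuousOn.congr (heq n)
  refine ⟨fun n _ => hcont n, ?_⟩
  obtain ⟨φ, φl, hφ, hD'⟩ := wz_time_exists
    (wz_countable (y := fun s => x (wzClamp T s)) (yl := fun s => leftVal x (wzClamp T s)) hl hr)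
  have hD : ∀ t, leftVal x (wzClamp T t) ≠ x (wzClamp T t) → φl t < φ t := fun t ht => hD' t ht
  choose R hR using hφ.exists_inv
  have hex : ∀ n : ℕ, ∃ S : ℝ → ℝ, 1 ≤ n →
      (Continuous S ∧ Monotone S ∧ ∀ σ, wzAvg n φ (S σ) = σ) := by
    intro n
    by_cases hn : 1 ≤ n
    · obtain ⟨S, hS⟩ := hφ.avg_inv hn
      exact ⟨S, fun _ => hS⟩
    · exact ⟨id, fun h => absurd h hn⟩
  choose Rn hRn' using hex
  have hRn : ∀ n, 1 ≤ n → ∀ σ, wzAvg n φ (Rn n σ) = σ := fun n hn => (hRn' n hn).2.2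
  have hclose : ∀ n, 1 ≤ n → ∀ σ, |Rn n σ - R σ| ≤ 1/(n:ℝ) := fun n hn σ =>
    hφ.inv_close hn (hRn n hn σ) (hR σ).1 (hR σ).2
  have hRc : Continuous R := by
    have hu : TendstoUniformly Rn R atTop := by
      rw [Metric.tendstoUniformly_iff]
      intro ε hε
      filter_upwards [eventually_ge_atTop 1,
        tendsto_one_div_atTop_nhds_zero_nat.eventually (gt_mem_nhds hε)] with n hn h σ
      rw [dist_comm, Real.dist_eq]
      exact (hclose n hn σ).trans_lt h
    exact hu.continuous ((eventually_ge_atTop 1).mono fun n hn => (hRn' n hn).1).frequently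
  obtain ⟨huc, hunif⟩ := wz_uniform
    (F := fun n σ => wzAvg n (fun s => x (wzClamp T s)) (wzClamp T (Rn n σ)))
    (u := wzU T x φ φl R) (wz_conv hT hx hxT hext hφ hD hR hRc hRn)
  have hrep := wz_paramRep_lim hT hxT hφ hD hR hRc huc
  rw [Metric.tendsto_nhds]
  intro ε hε
  have hε2 : 0 < ε/2 := by positivity
  filter_upwards [eventually_ge_atTop 1,
    tendsto_one_div_atTop_nhds_zero_nat.eventually (gt_mem_nhds hε2),
    hunif (-1) (T+1) (ε/2) hε2] with n hn h1 h2
  have hn' : 1/(n:ℝ) ≤ 1 := by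
    rw [div_le_one (by positivity)]; exact_mod_cast hn
  have hrepn : ParamRep T (fun t => (n:ℝ) * ∫ s in (t - 1/(n:ℝ))..t, x s) _ _ :=
    wz_paramRep_cont (ρ := fun s => wzClamp T (Rn n (-1 + (T + 2) * s))) (hcont n)
      ((wzClamp_cont T).comp ((hRn' n hn).1.comp (by fun_prop)))
      (by
        intro a b hab
        exact wzClamp_mono T ((hRn' n hn).2.1 (by nlinarith)))
      (by
        apply wzClamp_of_le
        by_contra hc
        have h3 := (hφ.avg_bd hn (Rn n (-1 + (T + 2) * 0))).1
        rw [hRn n hn] at h3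
        have h4 := hφ.lb (Rn n (-1 + (T + 2) * 0) - 1/(n:ℝ))
        linarith)
      (by
        apply wzClamp_of_ge hT
        by_contra hc
        have h3 := (hφ.avg_bd hn (Rn n (-1 + (T + 2) * 1))).2
        rw [hRn n hn] at h3
        have h4 := hφ.ub (Rn n (-1 + (T + 2) * 1))
        linarith)
      (fun s => wzClamp_mem hT _)
  have hnn : ∀ g : ℝ → ℝ, 0 ≤ sSup ((fun s => |g s|) '' Set.Icc (0:ℝ) 1) := by
    intro g
    apply Real.sSup_nonneg
    rintro _ ⟨s, _, rfl⟩
    exact abs_nonneg _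
  have hset : ∀ d ∈ {d : ℝ | ∃ u r v ρ : ℝ → ℝ,
      ParamRep T (fun t => (n:ℝ) * ∫ s in (t - 1/(n:ℝ))..t, x s) u r ∧ ParamRep T x v ρ ∧
      d = max (sSup ((fun s => |u s - v s|) '' Set.Icc (0:ℝ) 1))
            (sSup ((fun s => |r s - ρ s|) '' Set.Icc (0:ℝ) 1))}, 0 ≤ d := by
    rintro d ⟨u, r, v, ρ, _, _, rfl⟩
    exact le_max_of_le_left (hnn (fun s => u s - v s))
  have hne : (Set.Icc (0:ℝ) 1).Nonempty := ⟨0, by simp⟩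
  have hup : dM1 T (fun t => (n:ℝ) * ∫ s in (t - 1/(n:ℝ))..t, x s) x ≤ ε/2 := by
    unfold dM1
    refine (csInf_le ⟨0, hset⟩ ⟨_, _, _, _, hrepn, hrep, rfl⟩).trans ?_
    refine max_le (csSup_le (hne.image _) ?_) (csSup_le (hne.image _) ?_)
    · rintro _ ⟨s, hs, rfl⟩
      have h3 := h2 (-1 + (T + 2) * s) ⟨by nlinarith [hs.1], by nlinarith [hs.2]⟩
      have h4 := heq n (wzClamp_mem hT (Rn n (-1 + (T + 2) * s)))
      simp only at h4 ⊢
      rw [h4]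
      exact h3.le
    · rintro _ ⟨s, hs, rfl⟩
      simp only
      exact ((wzClamp_lip T _ _).trans (hclose n hn _)).trans h1.le
  have hlow : 0 ≤ dM1 T (fun t => (n:ℝ) * ∫ s in (t - 1/(n:ℝ))..t, x s) x :=
    Real.sInf_nonneg hset
  rw [Real.dist_eq, sub_zero, abs_of_nonneg hlow]
  linarith
end
end

section
/- Let T > 0 and let α_n, β_n (n ≥ 1) and α₀, β₀ be càdlàg functions on [0,T] such that α_n → α₀ uniformly on [0,T] and β_n → β₀ in the Skorokhod M1 topology. Assume in addition that for every t ∈ [0,T] at which α₀ is discontinuous (Δα₀(t) ≠ 0) there is δ > 0 such that β_n → β₀ uniformly on [0,T] ∩ [t−δ, t+δ]. Then α_n + β_n → α₀ + β₀ in the Skorokhod M1 topology. -/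
open Filter Set MeasureTheory Topology

noncomputable section

/-- The jump `Δx(t) = x(t) − x(t−)` of a càdlàg path. -/
def jumpAt (x : ℝ → ℝ) (t : ℝ) : ℝ := x t - leftVal x t

def gp (x : ℝ → ℝ) (t l : ℝ) : ℝ := (1 - l) * leftVal x t + l * x t

def lexLE (t₁ l₁ t₂ l₂ : ℝ) : Prop := t₁ < t₂ ∨ (t₁ = t₂ ∧ l₁ ≤ l₂)

def Bet (e p q r : ℝ) : Prop := min p r - e ≤ q ∧ q ≤ max p r + e

def NM (T : ℝ) (x : ℝ → ℝ) (e : ℝ) (W : Set ℝ) : Prop :=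
  ∀ t₁ l₁ t₂ l₂ t₃ l₃ : ℝ, t₁ ∈ Icc 0 T → t₂ ∈ Icc 0 T → t₃ ∈ Icc 0 T →
    t₁ ∈ W → t₂ ∈ W → t₃ ∈ W → l₁ ∈ Icc (0:ℝ) 1 → l₂ ∈ Icc (0:ℝ) 1 → l₃ ∈ Icc (0:ℝ) 1 →
    lexLE t₁ l₁ t₂ l₂ → lexLE t₂ l₂ t₃ l₃ → Bet e (gp x t₁ l₁) (gp x t₂ l₂) (gp x t₃ l₃)

lemma Bet.perturb {e p q r h p' q' r' : ℝ} (H : Bet e p q r) (hp : |p' - p| ≤ h)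
    (hq : |q' - q| ≤ h) (hr : |r' - r| ≤ h) : Bet (e + 2 * h) p' q' r' := by
  obtain ⟨h1, h2⟩ := H
  rw [abs_le] at hp hq hr
  constructor
  · have : min p' r' ≤ min p r + h := by
      rcases min_choice p r with h | h <;> rw [h]
      · exact (min_le_left _ _).trans (by linarith)
      · exact (min_le_right _ _).trans (by linarith)
    linarith
  · have : max p r - h ≤ max p' r' := by
      rcases max_choice p r with h | h <;> rw [h]
      · exact le_trans (by linarith) (le_max_left _ _)
      · exact le_trans (by linarith) (le_max_right _ _)
    linarith

lemma Bet.mono {e e' p q r : ℝ} (H : Bet e p q r) (h : e ≤ e') : Bet e' p q r :=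
  ⟨by linarith [H.1], by linarith [H.2]⟩

lemma Bet.neg {e p q r : ℝ} (H : Bet e p q r) : Bet e (-p) (-q) (-r) := by
  obtain ⟨h1, h2⟩ := H
  constructor
  · rw [min_neg_neg]; linarith
  · rw [max_neg_neg]; linarith

lemma leftVal_tendsto {T : ℝ} {x : ℝ → ℝ} (hx : Cadlag T x) {t : ℝ} (h0 : 0 < t) (h1 : t ≤ T) :
    Tendsto x (𝓝[<] t) (𝓝 (leftVal x t)) := by
  obtain ⟨L, hL⟩ := hx.2 t ⟨h0, h1⟩
  have : leftVal x t = L := by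
    unfold leftVal
    rw [if_neg (not_le.2 h0)]
    exact leftLim_eq_of_tendsto hL
  rw [this]; exact hL

lemma leftVal_zero (x : ℝ → ℝ) : leftVal x 0 = x 0 := by simp [leftVal]

lemma Cadlag.add {T : ℝ} {x y : ℝ → ℝ} (hx : Cadlag T x) (hy : Cadlag T y) :
    Cadlag T (fun s => x s + y s) := by
  refine ⟨fun t ht => (hx.1 t ht).add (hy.1 t ht), fun t ht => ?_⟩
  obtain ⟨L, hL⟩ := hx.2 t ht
  obtain ⟨M, hM⟩ := hy.2 t ht
  exact ⟨_, hL.add hM⟩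

lemma Cadlag.sub {T : ℝ} {x y : ℝ → ℝ} (hx : Cadlag T x) (hy : Cadlag T y) :
    Cadlag T (fun s => x s - y s) := by
  refine ⟨fun t ht => (hx.1 t ht).sub (hy.1 t ht), fun t ht => ?_⟩
  obtain ⟨L, hL⟩ := hx.2 t ht
  obtain ⟨M, hM⟩ := hy.2 t ht
  exact ⟨_, hL.sub hM⟩

lemma leftVal_add {T : ℝ} {x y : ℝ → ℝ} (hx : Cadlag T x) (hy : Cadlag T y) {t : ℝ}
    (ht : t ∈ Icc 0 T) : leftVal (fun s => x s + y s) t = leftVal x t + leftVal y t := by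
  rcases ht.1.eq_or_lt with rfl | h0
  · simp [leftVal_zero]
  · exact tendsto_nhds_unique (leftVal_tendsto (hx.add hy) h0 ht.2)
      ((leftVal_tendsto hx h0 ht.2).add (leftVal_tendsto hy h0 ht.2))

lemma leftVal_sub {T : ℝ} {x y : ℝ → ℝ} (hx : Cadlag T x) (hy : Cadlag T y) {t : ℝ}
    (ht : t ∈ Icc 0 T) : leftVal (fun s => x s - y s) t = leftVal x t - leftVal y t := by
  rcases ht.1.eq_or_lt with rfl | h0
  · simp [leftVal_zero]
  · exact tendsto_nhds_unique (leftVal_tendsto (hx.sub hy) h0 ht.2)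
      ((leftVal_tendsto hx h0 ht.2).sub (leftVal_tendsto hy h0 ht.2))

lemma gp_add {T : ℝ} {x y : ℝ → ℝ} (hx : Cadlag T x) (hy : Cadlag T y) {t : ℝ}
    (ht : t ∈ Icc 0 T) (l : ℝ) : gp (fun s => x s + y s) t l = gp x t l + gp y t l := by
  simp only [gp, leftVal_add hx hy ht]; ring

lemma gp_sub {T : ℝ} {x y : ℝ → ℝ} (hx : Cadlag T x) (hy : Cadlag T y) {t : ℝ}
    (ht : t ∈ Icc 0 T) (l : ℝ) : gp (fun s => x s - y s) t l = gp x t l - gp y t l := by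
  simp only [gp, leftVal_sub hx hy ht]; ring

lemma comb_bound {p q A e l : ℝ} (hp : |p - A| ≤ e) (hq : |q - A| ≤ e) (hl : l ∈ Icc (0:ℝ) 1) :
    |(1 - l) * p + l * q - A| ≤ e := by
  have h : (1 - l) * p + l * q - A = (1 - l) * (p - A) + l * (q - A) := by ring
  obtain ⟨h0, h1⟩ := hl
  rw [abs_le] at *
  rw [h]
  constructor <;> nlinarith

lemma gp_bound {T : ℝ} {x : ℝ → ℝ} (hx : Cadlag T x) {t A e η : ℝ} (ht : t ∈ Icc 0 T)
    (hη : 0 < η) (H : ∀ s ∈ Icc 0 T, t - η < s → s ≤ t → |x s - A| ≤ e) {l : ℝ}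
    (hl : l ∈ Icc (0:ℝ) 1) : |gp x t l - A| ≤ e := by
  refine comb_bound ?_ (H t ht (by linarith) le_rfl) hl
  rcases ht.1.eq_or_lt with rfl | h0
  · rw [leftVal_zero]; exact H 0 ht (by linarith) le_rfl
  · have h1 := ((leftVal_tendsto hx h0 ht.2).sub_const A).abs
    refine le_of_tendsto h1 ?_
    have : Ioo (max 0 (t - η)) t ∈ 𝓝[<] t := Ioo_mem_nhdsLT (max_lt h0 (by linarith))
    filter_upwards [this] with s hs
    have := max_lt_iff.1 hs.1
    exact H s ⟨this.1.le, hs.2.le.trans ht.2⟩ this.2 hs.2.le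

lemma local_window {T : ℝ} {x : ℝ → ℝ} (hx : Cadlag T x) {t₀ e : ℝ} (ht₀ : t₀ ∈ Icc 0 T)
    (he : 0 < e) : ∃ δ > 0, ∀ t ∈ Icc 0 T, |t - t₀| < δ → ∀ l ∈ Icc (0:ℝ) 1,
      (t < t₀ → |gp x t l - leftVal x t₀| ≤ e) ∧ (t₀ < t → |gp x t l - x t₀| ≤ e) := by
  have hL : ∃ δ > 0, ∀ s ∈ Icc 0 T, t₀ - δ < s → s < t₀ → |x s - leftVal x t₀| ≤ e := by
    rcases ht₀.1.eq_or_lt with rfl | h0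
    · exact ⟨1, one_pos, fun s hs _ h => absurd hs.1 (not_le.2 h)⟩
    · have h1 := (Metric.tendsto_nhdsWithin_nhds.1 (leftVal_tendsto hx h0 ht₀.2)) e he
      obtain ⟨δ, hδ, h⟩ := h1
      refine ⟨δ, hδ, fun s _ h1 h2 => ?_⟩
      have := h (x := s) h2 (by rw [Real.dist_eq, abs_lt]; constructor <;> linarith)
      exact this.le
  have hR : ∃ δ > 0, ∀ s ∈ Icc 0 T, t₀ ≤ s → s < t₀ + δ → |x s - x t₀| ≤ e := by
    rcases ht₀.2.eq_or_lt with rfl | h0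
    · refine ⟨1, one_pos, fun s hs h _ => ?_⟩
      rw [le_antisymm hs.2 h]; simpa using he.le
    · have h1 := (Metric.tendsto_nhdsWithin_nhds.1 (hx.1 t₀ ⟨ht₀.1, h0⟩)) e he
      obtain ⟨δ, hδ, h⟩ := h1
      refine ⟨δ, hδ, fun s _ h1 h2 => ?_⟩
      have := h (x := s) h1 (by rw [Real.dist_eq, abs_lt]; constructor <;> linarith)
      exact this.le
  obtain ⟨δ₁, h1, H1⟩ := hL
  obtain ⟨δ₂, h2, H2⟩ := hR
  refine ⟨min δ₁ δ₂, lt_min h1 h2, fun t ht htt l hl => ?_⟩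
  have ha := abs_lt.1 (htt.trans_le (min_le_left _ _))
  have hb := abs_lt.1 (htt.trans_le (min_le_right _ _))
  constructor
  · intro h
    refine gp_bound hx ht (η := t - (t₀ - δ₁)) (by linarith) ?_ hl
    intro s hs h3 h4
    exact H1 s hs (by linarith) (by linarith)
  · intro h
    refine gp_bound hx ht (η := t - t₀) (by linarith) ?_ hl
    intro s hs h3 h4
    exact H2 s hs (by linarith) (by linarith)

lemma Bet_line {A B h₁ h₂ h₃ : ℝ} (h12 : h₁ ≤ h₂) (h23 : h₂ ≤ h₃) :
    Bet 0 ((1 - h₁) * A + h₁ * B) ((1 - h₂) * A + h₂ * B) ((1 - h₃) * A + h₃ * B) := by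
  unfold Bet
  rcases le_total A B with h | h
  · constructor
    · rw [sub_zero, min_le_iff]; left; nlinarith
    · rw [add_zero, le_max_iff]; right; nlinarith
  · constructor
    · rw [sub_zero, min_le_iff]; right; nlinarith
    · rw [add_zero, le_max_iff]; left; nlinarith

lemma NM_local {T : ℝ} {x : ℝ → ℝ} (hx : Cadlag T x) {t₀ e : ℝ} (ht₀ : t₀ ∈ Icc 0 T)
    (he : 0 < e) : ∃ δ > 0, NM T x e {t | |t - t₀| < δ} := by
  obtain ⟨δ, hδ, H⟩ := local_window hx ht₀ (half_pos he)
  refine ⟨δ, hδ, ?_⟩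
  intro t₁ l₁ t₂ l₂ t₃ l₃ ht₁ ht₂ ht₃ hw₁ hw₂ hw₃ hl₁ hl₂ hl₃ h12 h23
  let h : ℝ → ℝ → ℝ := fun t l => if t < t₀ then 0 else if t = t₀ then l else 1
  have key : ∀ t l, t ∈ Icc 0 T → l ∈ Icc (0:ℝ) 1 → |t - t₀| < δ →
      |gp x t l - ((1 - h t l) * leftVal x t₀ + h t l * x t₀)| ≤ e / 2 := by
    intro t l ht hl hw
    have := H t ht hw l hl
    rcases lt_trichotomy t t₀ with h' | h' | h'
    · simpa [h, h'] using this.1 h'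
    · simp only [h, h', lt_irrefl, if_false, if_true, gp, sub_self, abs_zero]; linarith
    · simpa [h, h'.ne', not_lt.2 h'.le] using this.2 h'
  have hm : ∀ t l t' l', l ∈ Icc (0:ℝ) 1 → l' ∈ Icc (0:ℝ) 1 → lexLE t l t' l' →
      h t l ≤ h t' l' := by
    intro t l t' l' hl hl' hle
    have := hl.1; have := hl.2; have := hl'.1; have := hl'.2
    simp only [h]
    rcases hle with h1 | ⟨rfl, h1⟩ <;> split_ifs <;> linarith
  have := (Bet_line (A := leftVal x t₀) (B := x t₀) (hm _ _ _ _ hl₁ hl₂ h12)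
    (hm _ _ _ _ hl₂ hl₃ h23)).perturb
    (key t₁ l₁ ht₁ hl₁ hw₁) (key t₂ l₂ ht₂ hl₂ hw₂) (key t₃ l₃ ht₃ hl₃ hw₃)
  exact this.mono (by linarith)

lemma countable_jumps {T : ℝ} {x : ℝ → ℝ} (hx : Cadlag T x) :
    {t ∈ Icc 0 T | leftVal x t ≠ x t}.Countable := by
  have h1 : ∀ k : ℕ, {t ∈ Icc 0 T | 1 / ((k:ℝ) + 1) < |x t - leftVal x t|}.Countable := by
    intro k
    set e : ℝ := 1 / ((k:ℝ) + 1) with he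
    have hepos : 0 < e := by positivity
    have : (Icc 0 T ∩ {t | t ∈ Icc 0 T ∧ e < |x t - leftVal x t|}).Countable := by
      refine IsCompact.induction_on (p := fun s => (s ∩ {t | t ∈ Icc 0 T ∧ e < |x t - leftVal x t|}).Countable)
        isCompact_Icc (by simp) (fun s t hst ht => ht.mono (inter_subset_inter_left _ hst))
        (fun s t hs ht => by rw [union_inter_distrib_right]; exact hs.union ht) ?_
      intro t₀ ht₀
      obtain ⟨δ, hδ, H⟩ := local_window hx ht₀ (half_pos hepos)
      refine ⟨Metric.ball t₀ δ, mem_nhdsWithin_of_mem_nhds (Metric.ball_mem_nhds _ hδ), ?_⟩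
      refine (countable_singleton t₀).mono ?_
      rintro t ⟨ht, htI, hj⟩
      rw [mem_singleton_iff]
      by_contra hne
      rw [Metric.mem_ball, Real.dist_eq] at ht
      have a1 := H t htI ht 0 (by simp)
      have a2 := H t htI ht 1 (by simp)
      simp only [gp, sub_zero, one_mul, zero_mul, add_zero, sub_self, zero_add] at a1 a2
      rcases lt_or_gt_of_ne hne with h | h
      · have b1 := abs_le.1 (a1.1 h); have b2 := abs_le.1 (a2.1 h)
        rcases lt_abs.1 hj with h | h <;> linarith
      · have b1 := abs_le.1 (a1.2 h); have b2 := abs_le.1 (a2.2 h)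
        rcases lt_abs.1 hj with h | h <;> linarith
    refine Set.Countable.mono ?_ this
    intro t ht
    exact ⟨ht.1, ht⟩
  refine (countable_iUnion h1).mono ?_
  rintro t ⟨ht, hne⟩
  obtain ⟨k, hk⟩ := exists_nat_one_div_lt (abs_pos.2 (sub_ne_zero.2 hne.symm))
  exact mem_iUnion.2 ⟨k, ht, hk⟩

lemma exists_clock {J : Set ℝ} (hJ : J.Countable) :
    ∃ H : ℝ → ℝ, Monotone H ∧ ∀ t ∈ J, Function.leftLim H t < Function.rightLim H t := by
  obtain ⟨d, hd⟩ := (hJ.insert (0:ℝ)).exists_eq_range (insert_nonempty _ _)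
  have hsum : ∀ t, Summable (fun i : ℕ => if d i ≤ t then ((1:ℝ)/2)^i else 0) := by
    intro t
    refine Summable.of_nonneg_of_le (fun i => ?_) (fun i => ?_) summable_geometric_two
    · split_ifs <;> positivity
    · split_ifs
      · exact le_rfl
      · positivity
  have hmono : Monotone (fun t : ℝ => ∑' i : ℕ, if d i ≤ t then ((1:ℝ)/2)^i else 0) := by
    intro t t' htt
    refine Summable.tsum_le_tsum (fun i => ?_) (hsum t) (hsum t')
    split_ifs with h1 h2
    · exact le_rfl
    · exact absurd (h1.trans htt) h2
    · positivity
    · exact le_rfl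
  refine ⟨_, hmono, ?_⟩
  intro t ht
  have : t ∈ range d := hd ▸ mem_insert_of_mem _ ht
  obtain ⟨j, rfl⟩ := this
  refine lt_of_lt_of_le ?_ (hmono.le_rightLim le_rfl)
  have hlt : ∀ s < d j, (∑' i : ℕ, if d i ≤ s then ((1:ℝ)/2)^i else 0) ≤
      (∑' i : ℕ, if d i ≤ d j then ((1:ℝ)/2)^i else 0) - (1/2)^j := by
    intro s hs
    have h1 : (∑' i : ℕ, if i = j then ((1:ℝ)/2)^j else 0) = (1/2)^j := tsum_ite_eq j _
    have h2 : Summable (fun i : ℕ => if i = j then ((1:ℝ)/2)^j else 0) :=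
      (hasSum_ite_eq j _).summable
    rw [← h1, ← (hsum _).tsum_sub h2]
    refine Summable.tsum_le_tsum (fun i => ?_) (hsum s) ((hsum _).sub h2)
    by_cases hij : i = j
    · subst hij; simp [not_le.2 hs]
    · simp only [hij, if_false, sub_zero]
      split_ifs with h3 h4
      · exact le_rfl
      · exact absurd (h3.trans hs.le) h4
      · positivity
      · exact le_rfl
  have hle := le_of_tendsto (hmono.tendsto_leftLim (d j))
    (eventually_nhdsWithin_of_forall (fun s hs => hlt s hs))
  have : (0:ℝ) < (1/2)^j := by positivity
  linarith

lemma graphLE_gp {x : ℝ → ℝ} {t₁ l₁ t₂ l₂ : ℝ} (h1 : l₁ ∈ Icc (0:ℝ) 1) (h2 : l₂ ∈ Icc (0:ℝ) 1)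
    (h : lexLE t₁ l₁ t₂ l₂) : graphLE x (gp x t₁ l₁, t₁) (gp x t₂ l₂, t₂) := by
  rcases h with h | ⟨rfl, h⟩
  · exact Or.inl h
  · refine Or.inr ⟨rfl, ?_⟩
    have e : ∀ l, gp x t₁ l - leftVal x t₁ = l * (x t₁ - leftVal x t₁) := by
      intro l; simp only [gp]; ring
    simp only [e, abs_mul, abs_of_nonneg h1.1, abs_of_nonneg h2.1]
    exact mul_le_mul_of_nonneg_right h (abs_nonneg _)

lemma gp_mem {T : ℝ} {x : ℝ → ℝ} {t l : ℝ} (ht : t ∈ Icc 0 T) (hl : l ∈ Icc (0:ℝ) 1) :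
    (gp x t l, t) ∈ compGraph T x :=
  ⟨ht, 1 - l, ⟨by linarith [hl.2], by linarith [hl.1]⟩, by simp only [gp]; ring⟩

lemma mem_gp {T : ℝ} {x : ℝ → ℝ} {p : ℝ × ℝ} (hp : p ∈ compGraph T x) :
    p.2 ∈ Icc 0 T ∧ ∃ l ∈ Icc (0:ℝ) 1, p.1 = gp x p.2 l := by
  obtain ⟨h, c, hc, he⟩ := hp
  exact ⟨h, 1 - c, ⟨by linarith [hc.2], by linarith [hc.1]⟩, by rw [he]; simp only [gp]; ring⟩

lemma exists_paramRep {T : ℝ} (hT : 0 < T) {x : ℝ → ℝ} (hx : Cadlag T x) :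
    ∃ u r, ParamRep T x u r := by
  obtain ⟨H, hmono, hH⟩ := exists_clock (countable_jumps hx)
  set Lm := Function.leftLim H with hLm
  set Rm := Function.rightLim H with hRm
  have hLR : ∀ t, Lm t ≤ Rm t := fun t => hmono.leftLim_le_rightLim le_rfl
  have hRL : ∀ t t', t < t' → Rm t ≤ Lm t' := fun t t' h => hmono.rightLim_le_leftLim h
  set K : ℝ → ℝ → ℝ := fun t l => t + ((1 - l) * Lm t + l * Rm t) with hK
  have hKl : ∀ t l, l ∈ Icc (0:ℝ) 1 → t + Lm t ≤ K t l := fun t l hl => by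
    have := hLR t; simp only [hK]; nlinarith [hl.1, hl.2]
  have hKr : ∀ t l, l ∈ Icc (0:ℝ) 1 → K t l ≤ t + Rm t := fun t l hl => by
    have := hLR t; simp only [hK]; nlinarith [hl.1, hl.2]
  have hKlip : ∀ t l t' l', l ∈ Icc (0:ℝ) 1 → l' ∈ Icc (0:ℝ) 1 → t < t' →
      t' - t ≤ K t' l' - K t l := by
    intro t l t' l' hl hl' h
    linarith [hKl t' l' hl', hKr t l hl, hRL t t' h]
  set S0 := (0:ℝ) + Lm 0 with hS0
  set S1 := T + Rm T with hS1
  have hS01 : S0 < S1 := by have := hRL 0 T hT; have := hLR 0; have := hLR T; linarith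
  -- surjectivity of the clock
  have hsurj : ∀ s ∈ Icc S0 S1, ∃ t l, t ∈ Icc 0 T ∧ l ∈ Icc (0:ℝ) 1 ∧ K t l = s := by
    intro s hs
    set A := {t | t ∈ Icc 0 T ∧ t + Lm t ≤ s} with hA
    have hA0 : (0:ℝ) ∈ A := ⟨⟨le_rfl, hT.le⟩, hs.1⟩
    have hAb : BddAbove A := ⟨T, fun t ht => ht.1.2⟩
    set t := sSup A with ht
    have ht0 : 0 ≤ t := le_csSup hAb hA0
    have htT : t ≤ T := csSup_le ⟨0, hA0⟩ (fun t ht => ht.1.2)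
    have h1 : t + Lm t ≤ s := by
      rcases ht0.eq_or_lt with h | h
      · rw [← h]; exact hs.1
      · have htd : Tendsto (fun a => a + H a) (𝓝[<] t) (𝓝 (t + Lm t)) :=
          (tendsto_id.mono_left nhdsWithin_le_nhds).add (hmono.tendsto_leftLim t)
        refine le_of_tendsto htd (eventually_nhdsWithin_of_forall (fun a ha => ?_))
        obtain ⟨b, hb, hab⟩ := exists_lt_of_lt_csSup ⟨0, hA0⟩ (show a < sSup A from ha)
        have := hmono.le_leftLim hab
        linarith [hb.2]
    have h2 : s ≤ t + Rm t := by
      by_contra hcon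
      push Not at hcon
      rcases htT.eq_or_lt with h | h
      · rw [h] at hcon; linarith [hs.2]
      · have htd : Tendsto (fun a => a + H a) (𝓝[>] t) (𝓝 (t + Rm t)) :=
          (tendsto_id.mono_left nhdsWithin_le_nhds).add (hmono.tendsto_rightLim t)
        obtain ⟨b, hb1, hb2⟩ := ((htd.eventually_lt_const hcon).and
          (Ioo_mem_nhdsGT h)).exists
        have : b ∈ A := ⟨⟨ht0.trans hb2.1.le, hb2.2.le⟩,
          by have := hmono.leftLim_le (le_refl b); linarith⟩
        exact absurd (le_csSup hAb this) (not_le.2 hb2.1)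
    rcases (hLR t).eq_or_lt with h | h
    · exact ⟨t, 0, ⟨ht0, htT⟩, by simp, by simp only [hK]; linarith⟩
    · have hw : 0 < Rm t - Lm t := by linarith
      refine ⟨t, (s - t - Lm t) / (Rm t - Lm t), ⟨ht0, htT⟩,
        ⟨div_nonneg (by linarith) hw.le, (div_le_one hw).2 (by linarith)⟩, ?_⟩
      simp only [hK]
      field_simp
      ring
  choose! R Λ hR hΛ hRΛ using hsurj
  have hRm' : ∀ s ∈ Icc S0 S1, ∀ s' ∈ Icc S0 S1, s ≤ s' → R s ≤ R s' := by
    intro s hs s' hs' h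
    by_contra hcon
    push Not at hcon
    have := hKlip _ _ _ _ (hΛ s' hs') (hΛ s hs) hcon
    rw [hRΛ s hs, hRΛ s' hs'] at this
    linarith
  have hRlip : ∀ s ∈ Icc S0 S1, ∀ s' ∈ Icc S0 S1, |R s - R s'| ≤ |s - s'| := by
    have aux : ∀ s ∈ Icc S0 S1, ∀ s' ∈ Icc S0 S1, s ≤ s' → |R s - R s'| ≤ |s - s'| := by
      intro s hs s' hs' h
      rw [abs_sub_comm, abs_sub_comm s, abs_of_nonneg (by linarith [hRm' s hs s' hs' h]),
        abs_of_nonneg (by linarith)]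
      rcases (hRm' s hs s' hs' h).eq_or_lt with h' | h'
      · rw [h']; linarith
      · have := hKlip _ _ _ _ (hΛ s hs) (hΛ s' hs') h'
        rwa [hRΛ s hs, hRΛ s' hs'] at this
    intro s hs s' hs'
    rcases le_total s s' with h | h
    · exact aux s hs s' hs' h
    · rw [abs_sub_comm, abs_sub_comm s]; exact aux s' hs' s hs h
  -- uniqueness of graph point
  have hgp : ∀ t l l', t ∈ Icc 0 T → K t l = K t l' → gp x t l = gp x t l' := by
    intro t l l' ht h
    by_cases hj : leftVal x t = x t
    · simp only [gp, hj]; ring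
    · have := hH t ⟨ht, hj⟩
      have h3 : (l - l') * (Rm t - Lm t) = 0 := by simp only [hK] at h; linarith
      rcases mul_eq_zero.1 h3 with h4 | h4
      · rw [sub_eq_zero.1 h4]
      · exact absurd h4 (by linarith [this] : Rm t - Lm t > 0).ne'
  set U : ℝ → ℝ := fun s => gp x (R s) (Λ s) with hU
  have hRcont : ContinuousOn R (Icc S0 S1) := by
    rw [Metric.continuousOn_iff]
    intro s hs e he
    refine ⟨e, he, fun s' hs' h => ?_⟩
    rw [Real.dist_eq] at *
    exact (hRlip s' hs' s hs).trans_lt h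
  have hUcont : ContinuousOn U (Icc S0 S1) := by
    intro s₀ hs₀
    set t₀ := R s₀ with ht₀
    have ht₀I : t₀ ∈ Icc 0 T := hR s₀ hs₀
    set h : ℝ → ℝ := fun s => leftVal x t₀ +
      (max 0 (min 1 ((s - (t₀ + Lm t₀)) / (Rm t₀ - Lm t₀)))) * (x t₀ - leftVal x t₀) with hh
    have hhc : Continuous h := by
      simp only [hh, div_eq_mul_inv]; fun_prop
    have hat : ∀ s ∈ Icc S0 S1, R s = t₀ → U s = h s := by
      intro s hs hst
      simp only [hU, hst, hh, gp]
      by_cases hj : leftVal x t₀ = x t₀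
      · rw [hj]; ring
      · have hw := hH t₀ ⟨ht₀I, hj⟩
        have h1 := hRΛ s hs
        rw [hst] at h1
        have hw' : 0 < Rm t₀ - Lm t₀ := by linarith
        have : (s - (t₀ + Lm t₀)) / (Rm t₀ - Lm t₀) = Λ s := by
          rw [div_eq_iff hw'.ne']; simp only [hK] at h1; linarith
        rw [this, min_eq_right (hΛ s hs).2, max_eq_right (hΛ s hs).1]; ring
    rw [Metric.continuousWithinAt_iff]
    intro e he
    obtain ⟨δ, hδ, Hw⟩ := local_window hx ht₀I (half_pos he)
    obtain ⟨δ', hδ', Hc⟩ := Metric.continuous_iff.1 hhc s₀ (e / 2) (half_pos he)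
    refine ⟨min δ δ', lt_min hδ hδ', fun s hs hd => ?_⟩
    have hd1 := hd.trans_le (min_le_left _ _)
    have hd2 := Hc s (hd.trans_le (min_le_right _ _))
    rw [Real.dist_eq] at *
    rw [hat s₀ hs₀ rfl]
    have hcl : |U s - h s| ≤ e / 2 := by
      have hw := Hw (R s) (hR s hs) ((hRlip s hs s₀ hs₀).trans_lt hd1) (Λ s) (hΛ s hs)
      rcases lt_trichotomy (R s) t₀ with h' | h' | h'
      · have h1 := hw.1 h'
        have : h s = leftVal x t₀ := by
          have : (s - (t₀ + Lm t₀)) / (Rm t₀ - Lm t₀) ≤ 0 := by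
            apply div_nonpos_of_nonpos_of_nonneg
            · have := hKr (R s) _ (hΛ s hs)
              rw [hRΛ s hs] at this
              linarith [hRL _ _ h']
            · linarith [hLR t₀]
          simp only [hh]
          rw [max_eq_left ((min_le_right _ _).trans this)]; ring
        rw [this]; exact h1
      · rw [hat s hs h']; simp; linarith
      · have h1 := hw.2 h'
        have : h s = x t₀ := by
          by_cases hj : leftVal x t₀ = x t₀
          · simp only [hh, hj]; ring
          · have hww := hH t₀ ⟨ht₀I, hj⟩
            have hw' : 0 < Rm t₀ - Lm t₀ := by linarith
            have : 1 ≤ (s - (t₀ + Lm t₀)) / (Rm t₀ - Lm t₀) := by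
              rw [one_le_div hw']
              have := hKl (R s) _ (hΛ s hs)
              rw [hRΛ s hs] at this
              linarith [hRL _ _ h']
            simp only [hh]
            rw [min_eq_left this, max_eq_right zero_le_one]; ring
        rw [this]; exact h1
    have : U s - h s₀ = (U s - h s) + (h s - h s₀) := by ring
    rw [this]
    exact (abs_add_le _ _).trans_lt (by linarith)
  -- rescale
  set A : ℝ → ℝ := fun z => S0 + z * (S1 - S0) with hAdef
  have hAc : Continuous A := by simp only [hAdef]; fun_prop
  have hAm : MapsTo A (Icc 0 1) (Icc S0 S1) := by
    intro z hz
    constructor <;> simp only [hAdef] <;> nlinarith [hz.1, hz.2]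
  refine ⟨fun z => U (A z), fun z => R (A z), hUcont.comp hAc.continuousOn hAm,
    hRcont.comp hAc.continuousOn hAm, ?_, ?_, ?_⟩
  · intro z hz
    exact gp_mem (hR _ (hAm hz)) (hΛ _ (hAm hz))
  · intro p hp
    obtain ⟨ht, l, hl, hpe⟩ := mem_gp hp
    have hlo : S0 ≤ K p.2 l := by
      rcases ht.1.eq_or_lt with h | h
      · rw [← h]; exact hKl 0 l hl
      · have := hKlip 0 0 p.2 l (by simp) hl h
        have := hKl 0 0 (by simp)
        linarith
    have hhi : K p.2 l ≤ S1 := by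
      rcases ht.2.eq_or_lt with h | h
      · rw [h]; exact hKr T l hl
      · have := hKlip p.2 l T 1 hl (by simp) h
        have := hKr T 1 (by simp)
        linarith
    set s := K p.2 l with hs
    have hsI : s ∈ Icc S0 S1 := ⟨hlo, hhi⟩
    have hAz : A ((s - S0) / (S1 - S0)) = s := by
      simp only [hAdef]
      have : S1 - S0 ≠ 0 := by linarith
      field_simp
      ring
    refine ⟨(s - S0) / (S1 - S0), ⟨div_nonneg (by linarith) (by linarith),
      (div_le_one (by linarith)).2 (by linarith)⟩, ?_⟩
    have hRs : R s = p.2 := by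
      have h0 := hRΛ s hsI
      rcases lt_trichotomy (R s) p.2 with h | h | h
      · have := hKlip _ _ _ _ (hΛ s hsI) hl h
        linarith
      · exact h
      · have := hKlip _ _ _ _ hl (hΛ s hsI) h
        linarith
    simp only [hAz]
    refine Prod.ext ?_ hRs
    simp only [hU, hpe, hRs]
    apply hgp _ _ _ ht
    have h0 := hRΛ s hsI
    rw [hRs] at h0
    rw [h0]
  · intro z₁ hz₁ z₂ hz₂ hz
    have hAle : A z₁ ≤ A z₂ := by simp only [hAdef]; nlinarith
    have h1 := hAm hz₁
    have h2 := hAm hz₂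
    rcases (hRm' _ h1 _ h2 hAle).eq_or_lt with h | h
    · by_cases hj : leftVal x (R (A z₁)) = x (R (A z₁))
      · refine Or.inr ⟨h, ?_⟩
        simp only [hU, ← h, gp, hj]
        apply le_of_eq
        congr 1; ring
      · have hw := hH _ ⟨hR _ h1, hj⟩
        apply graphLE_gp (hΛ _ h1) (hΛ _ h2)
        refine Or.inr ⟨h, ?_⟩
        have e1 := hRΛ _ h1
        have e2 := hRΛ _ h2
        rw [← h] at e2
        simp only [hK] at e1 e2
        by_contra hcon
        push Not at hcon
        nlinarith
    · exact Or.inl h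

lemma ParamRep.exists_lex {T : ℝ} {x u r : ℝ → ℝ} (h : ParamRep T x u r) :
    ∃ Λ : ℝ → ℝ, (∀ s ∈ Icc (0:ℝ) 1, Λ s ∈ Icc (0:ℝ) 1 ∧ u s = gp x (r s) (Λ s)) ∧
      ∀ s ∈ Icc (0:ℝ) 1, ∀ s' ∈ Icc (0:ℝ) 1, s ≤ s' → lexLE (r s) (Λ s) (r s') (Λ s') := by
  obtain ⟨-, -, hm, -, ho⟩ := h
  have : ∀ s ∈ Icc (0:ℝ) 1, ∃ l ∈ Icc (0:ℝ) 1, u s = gp x (r s) l := fun s hs => (mem_gp (hm s hs)).2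
  choose! L hL hu using this
  refine ⟨fun s => if leftVal x (r s) = x (r s) then 0 else L s, fun s hs => ?_, ?_⟩
  · by_cases hj : leftVal x (r s) = x (r s)
    · simp only [hj, if_true]
      refine ⟨by simp, ?_⟩
      rw [hu s hs]; simp only [gp, hj]; ring
    · simp only [hj, if_false]; exact ⟨hL s hs, hu s hs⟩
  · intro s hs s' hs' hle
    rcases ho s hs s' hs' hle with h | ⟨h1, h2⟩
    · exact Or.inl h
    · simp only at h1 h2
      refine Or.inr ⟨h1, ?_⟩
      simp only [← h1]
      split_ifs with hj
      · exact le_rfl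
      · rw [hu s hs, hu s' hs', ← h1] at h2
        have e : ∀ l, gp x (r s) l - leftVal x (r s) = l * (x (r s) - leftVal x (r s)) := by
          intro l; simp only [gp]; ring
        simp only [e, abs_mul, abs_of_nonneg (hL s hs).1, abs_of_nonneg (hL s' hs').1] at h2
        exact le_of_mul_le_mul_right h2 (abs_pos.2 (sub_ne_zero.2 (Ne.symm hj)))

lemma graphLE_antisymm {T : ℝ} {x : ℝ → ℝ} {t l t' l' : ℝ} (ht : t ∈ Icc 0 T)
    (hl : l ∈ Icc (0:ℝ) 1) (hl' : l' ∈ Icc (0:ℝ) 1)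
    (h : graphLE x (gp x t l, t) (gp x t' l', t')) (h' : graphLE x (gp x t' l', t') (gp x t l, t)) :
    t = t' ∧ gp x t l = gp x t' l' := by
  rcases h with h | ⟨h1, h2⟩
  · rcases h' with h' | ⟨h1', h2'⟩ <;> simp only at * <;> linarith
  · rcases h' with h' | ⟨h1', h2'⟩
    · simp only at *; linarith
    · simp only at *
      subst h1
      refine ⟨rfl, ?_⟩
      have e : ∀ l, gp x t l - leftVal x t = l * (x t - leftVal x t) := by
        intro l; simp only [gp]; ring
      have := le_antisymm h2 h2'
      simp only [e, abs_mul, abs_of_nonneg hl.1, abs_of_nonneg hl'.1] at this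
      by_cases hj : x t - leftVal x t = 0
      · have a := e l; have b := e l'
        rw [hj] at a b; linarith
      · rw [mul_right_cancel₀ (abs_ne_zero.2 hj) this]

lemma ParamRep.exists_sec {T : ℝ} {x u r : ℝ → ℝ} (h : ParamRep T x u r) :
    ∃ S : ℝ → ℝ → ℝ, (∀ t ∈ Icc 0 T, ∀ l ∈ Icc (0:ℝ) 1, S t l ∈ Icc (0:ℝ) 1 ∧
      u (S t l) = gp x t l ∧ r (S t l) = t) ∧
      ∀ t ∈ Icc 0 T, ∀ l ∈ Icc (0:ℝ) 1, ∀ t' ∈ Icc 0 T, ∀ l' ∈ Icc (0:ℝ) 1, lexLE t l t' l' →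
        S t l ≤ S t' l' := by
  obtain ⟨-, -, hm, hs, ho⟩ := h
  choose! S hS hSe using hs
  have hp : ∀ t ∈ Icc 0 T, ∀ l ∈ Icc (0:ℝ) 1, S (gp x t l, t) ∈ Icc (0:ℝ) 1 ∧
      u (S (gp x t l, t)) = gp x t l ∧ r (S (gp x t l, t)) = t := by
    intro t ht l hl
    have := hSe _ (gp_mem (x := x) ht hl)
    rw [Prod.mk.injEq] at this
    exact ⟨hS _ (gp_mem ht hl), this⟩
  refine ⟨fun t l => S (gp x t l, t), hp, ?_⟩
  intro t ht l hl t' ht' l' hl' hle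
  by_contra hcon
  push Not at hcon
  have h1 := ho _ (hp t' ht' l' hl').1 _ (hp t ht l hl).1 hcon.le
  rw [(hp t' ht' l' hl').2.1, (hp t' ht' l' hl').2.2, (hp t ht l hl).2.1, (hp t ht l hl).2.2] at h1
  obtain ⟨a, b⟩ := graphLE_antisymm ht hl hl' (graphLE_gp hl hl' hle) h1
  rw [a] at b
  simp only [a, b, lt_irrefl] at hcon

lemma ParamRep.r_mono {T : ℝ} {x u r : ℝ → ℝ} (h : ParamRep T x u r) {s s' : ℝ}
    (hs : s ∈ Icc (0:ℝ) 1) (hs' : s' ∈ Icc (0:ℝ) 1) (hle : s ≤ s') : r s ≤ r s' := by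
  rcases h.2.2.2.2 s hs s' hs' hle with h | ⟨h, -⟩
  · exact h.le
  · exact h.le

lemma ParamRep.zero {T : ℝ} (hT : 0 < T) {x u r : ℝ → ℝ} (h : ParamRep T x u r) :
    u 0 = x 0 ∧ r 0 = 0 := by
  have h0 : (0:ℝ) ∈ Icc (0:ℝ) 1 := by simp
  obtain ⟨S, hS, -⟩ := h.exists_sec
  obtain ⟨hs, -, hr⟩ := hS 0 ⟨le_rfl, hT.le⟩ 0 (by simp)
  have h1 := h.r_mono h0 hs hs.1
  rw [hr] at h1
  obtain ⟨ht, l, hl, hu⟩ := mem_gp (h.2.2.1 0 h0)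
  simp only at ht hu
  have hr0 := le_antisymm h1 ht.1
  refine ⟨?_, hr0⟩
  rw [hu, hr0]; simp only [gp, leftVal_zero]; ring

lemma ParamRep.one {T : ℝ} (hT : 0 < T) {x u r : ℝ → ℝ} (h : ParamRep T x u r) :
    u 1 = x T ∧ r 1 = T := by
  have h0 : (1:ℝ) ∈ Icc (0:ℝ) 1 := by simp
  have hTI : T ∈ Icc 0 T := ⟨hT.le, le_rfl⟩
  obtain ⟨S, hS, -⟩ := h.exists_sec
  obtain ⟨hs, hu, hr⟩ := hS T hTI 1 h0
  have h1 := h.r_mono hs h0 hs.2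
  rw [hr] at h1
  obtain ⟨ht, l, hl, hu1⟩ := mem_gp (h.2.2.1 1 h0)
  simp only at ht hu1
  have hr0 := le_antisymm ht.2 h1
  have h2 := h.2.2.2.2 _ hs _ h0 hs.2
  rw [hu, hr, hu1, hr0] at h2
  have := graphLE_antisymm hTI h0 hl h2 (graphLE_gp hl h0 (Or.inr ⟨rfl, hl.2⟩))
  refine ⟨?_, hr0⟩
  rw [hu1, hr0, ← this.2]; simp [gp]

lemma dM1_nonneg (T : ℝ) (x y : ℝ → ℝ) : 0 ≤ dM1 T x y := by
  apply Real.sInf_nonneg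
  rintro d ⟨u, r, v, ρ, -, -, rfl⟩
  apply le_max_of_le_left
  apply Real.sSup_nonneg
  rintro _ ⟨s, -, rfl⟩
  exact abs_nonneg _

lemma dM1_le {T : ℝ} {x y u r v ρ : ℝ → ℝ} (h : ParamRep T x u r) (h' : ParamRep T y v ρ) {e : ℝ}
    (he : ∀ s ∈ Icc (0:ℝ) 1, |u s - v s| ≤ e ∧ |r s - ρ s| ≤ e) : dM1 T x y ≤ e := by
  unfold dM1
  refine csInf_le_of_le ⟨0, ?_⟩ ⟨u, r, v, ρ, h, h', rfl⟩ ?_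
  · rintro d ⟨u, r, v, ρ, -, -, rfl⟩
    apply le_max_of_le_left
    apply Real.sSup_nonneg
    rintro _ ⟨s, -, rfl⟩
    exact abs_nonneg _
  · have hne : (Icc (0:ℝ) 1).Nonempty := ⟨0, by simp⟩
    apply max_le
    · apply csSup_le (hne.image _)
      rintro _ ⟨s, hs, rfl⟩
      exact (he s hs).1
    · apply csSup_le (hne.image _)
      rintro _ ⟨s, hs, rfl⟩
      exact (he s hs).2

lemma exists_of_dM1_lt {T : ℝ} (hT : 0 < T) {x y : ℝ → ℝ} (hx : Cadlag T x) (hy : Cadlag T y)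
    {e : ℝ} (he : dM1 T x y < e) : ∃ u r v ρ : ℝ → ℝ, ParamRep T x u r ∧ ParamRep T y v ρ ∧
      ∀ s ∈ Icc (0:ℝ) 1, |u s - v s| < e ∧ |r s - ρ s| < e := by
  obtain ⟨u₀, r₀, h₀⟩ := exists_paramRep hT hx
  obtain ⟨v₀, ρ₀, h₀'⟩ := exists_paramRep hT hy
  obtain ⟨d, ⟨u, r, v, ρ, h, h', rfl⟩, hd⟩ := exists_lt_of_csInf_lt
    (by exact ⟨_, u₀, r₀, v₀, ρ₀, h₀, h₀', rfl⟩) he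
  refine ⟨u, r, v, ρ, h, h', fun s hs => ?_⟩
  rw [max_lt_iff] at hd
  have b1 : BddAbove ((fun s => |u s - v s|) '' Icc (0:ℝ) 1) :=
    (isCompact_Icc.image_of_continuousOn (h.1.sub h'.1).abs).bddAbove
  have b2 : BddAbove ((fun s => |r s - ρ s|) '' Icc (0:ℝ) 1) :=
    (isCompact_Icc.image_of_continuousOn (h.2.1.sub h'.2.1).abs).bddAbove
  exact ⟨(le_csSup b1 ⟨s, hs, rfl⟩).trans_lt hd.1, (le_csSup b2 ⟨s, hs, rfl⟩).trans_lt hd.2⟩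

lemma NM_transfer {T : ℝ} {x y u r v ρ : ℝ → ℝ} (h : ParamRep T x u r) (h' : ParamRep T y v ρ)
    {η e t₀ δ : ℝ} (hcl : ∀ s ∈ Icc (0:ℝ) 1, |u s - v s| < η ∧ |r s - ρ s| < η)
    (hy : NM T y e {t | |t - t₀| < δ}) : NM T x (e + 2 * η) {t | |t - t₀| < δ - η} := by
  intro t₁ l₁ t₂ l₂ t₃ l₃ ht₁ ht₂ ht₃ hw₁ hw₂ hw₃ hl₁ hl₂ hl₃ h12 h23
  obtain ⟨S, hS, hSm⟩ := h.exists_sec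
  obtain ⟨Λ, hΛ, hΛm⟩ := h'.exists_lex
  have key : ∀ t l, t ∈ Icc 0 T → l ∈ Icc (0:ℝ) 1 → |t - t₀| < δ - η →
      |gp x t l - gp y (ρ (S t l)) (Λ (S t l))| ≤ η ∧ |ρ (S t l) - t₀| < δ ∧
        ρ (S t l) ∈ Icc 0 T ∧ Λ (S t l) ∈ Icc (0:ℝ) 1 := by
    intro t l ht hl hw
    obtain ⟨a, b, c⟩ := hS t ht l hl
    obtain ⟨d, f⟩ := hcl _ a
    rw [b, (hΛ _ a).2] at d
    rw [c] at f
    refine ⟨d.le, ?_, (h'.2.2.1 _ a).1, (hΛ _ a).1⟩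
    have : ρ (S t l) - t₀ = -(t - ρ (S t l)) + (t - t₀) := by ring
    rw [this]
    refine (abs_add_le _ _).trans_lt ?_
    rw [abs_neg]; linarith
  obtain ⟨k1, k2, k3, k4⟩ := key t₁ l₁ ht₁ hl₁ hw₁
  obtain ⟨m1, m2, m3, m4⟩ := key t₂ l₂ ht₂ hl₂ hw₂
  obtain ⟨n1, n2, n3, n4⟩ := key t₃ l₃ ht₃ hl₃ hw₃
  refine Bet.perturb (hy _ _ _ _ _ _ k3 m3 n3 k2 m2 n2 k4 m4 n4 ?_ ?_) k1 m1 n1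
  · exact hΛm _ (hS _ ht₁ _ hl₁).1 _ (hS _ ht₂ _ hl₂).1 (hSm _ ht₁ _ hl₁ _ ht₂ _ hl₂ h12)
  · exact hΛm _ (hS _ ht₂ _ hl₂).1 _ (hS _ ht₃ _ hl₃).1 (hSm _ ht₂ _ hl₂ _ ht₃ _ hl₃ h23)

lemma point_conv {T : ℝ} (hT : 0 < T) {b : ℕ → ℝ → ℝ} {b₀ : ℝ → ℝ} (hb : ∀ n, Cadlag T (b n))
    (hb₀ : Cadlag T b₀) (hconv : Tendsto (fun n => dM1 T (b n) b₀) atTop (𝓝 0)) {t : ℝ}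
    (ht : t ∈ Icc 0 T) (hc : leftVal b₀ t = b₀ t ∨ t = T) {e : ℝ} (he : 0 < e) :
    ∀ᶠ n in atTop, |b n t - b₀ t| ≤ e := by
  rcases hc with hc | rfl
  · obtain ⟨δ, hδ, H⟩ := local_window hb₀ ht (half_pos he)
    filter_upwards [hconv.eventually_lt_const (lt_min hδ (half_pos he))] with n hn
    obtain ⟨u, r, v, ρ, h, h', hcl⟩ := exists_of_dM1_lt hT (hb n) hb₀ hn
    obtain ⟨S, hS, -⟩ := h.exists_sec
    obtain ⟨a, b', c⟩ := hS t ht 1 (by simp)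
    obtain ⟨d, f⟩ := hcl _ a
    rw [b'] at d
    rw [c] at f
    obtain ⟨k1, l, hl, k2⟩ := mem_gp (h'.2.2.1 _ a)
    simp only at k1 k2
    rw [abs_sub_comm] at f
    have w := H _ k1 (f.trans_le (min_le_left _ _)) l hl
    rw [← k2, hc] at w
    have hv : |v (S t 1) - b₀ t| ≤ e / 2 := by
      rcases lt_trichotomy (ρ (S t 1)) t with h | h | h
      · exact w.1 h
      · rw [k2, h]; simp only [gp, hc]
        rw [show (1 - l) * b₀ t + l * b₀ t - b₀ t = 0 by ring, abs_zero]; linarith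
      · exact w.2 h
    simp only [gp, sub_self, zero_mul, zero_add, one_mul] at d
    have d' := (d.trans_le (min_le_right _ _)).le
    rw [abs_le] at *
    constructor <;> linarith
  · filter_upwards [hconv.eventually_lt_const he] with n hn
    obtain ⟨u, r, v, ρ, h, h', hcl⟩ := exists_of_dM1_lt hT (hb n) hb₀ hn
    have := (hcl 1 (by simp)).1
    rw [(h.one hT).1, (h'.one hT).1] at this
    exact this.le

lemma NM_M1 {T : ℝ} (hT : 0 < T) {b : ℕ → ℝ → ℝ} {b₀ : ℝ → ℝ} (hb : ∀ n, Cadlag T (b n))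
    (hb₀ : Cadlag T b₀) (hconv : Tendsto (fun n => dM1 T (b n) b₀) atTop (𝓝 0)) {t₀ : ℝ}
    (ht₀ : t₀ ∈ Icc 0 T) {e : ℝ} (he : 0 < e) :
    ∃ δ > 0, ∀ᶠ n in atTop, NM T (b n) e {t | |t - t₀| < δ} := by
  obtain ⟨δ, hδ, H⟩ := NM_local hb₀ ht₀ (half_pos he)
  refine ⟨δ / 2, half_pos hδ, ?_⟩
  have hη : 0 < min (δ / 2) (e / 4) := lt_min (half_pos hδ) (by linarith)
  filter_upwards [hconv.eventually_lt_const hη] with n hn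
  obtain ⟨u, r, v, ρ, h, h', hcl⟩ := exists_of_dM1_lt hT (hb n) hb₀ hn
  have := NM_transfer h h' hcl H
  have m1 := min_le_left (δ / 2) (e / 4)
  have m2 := min_le_right (δ / 2) (e / 4)
  intro t₁ l₁ t₂ l₂ t₃ l₃ ht₁ ht₂ ht₃ hw₁ hw₂ hw₃ hl₁ hl₂ hl₃ h12 h23
  simp only [mem_ofPred_eq] at hw₁ hw₂ hw₃
  refine (this t₁ l₁ t₂ l₂ t₃ l₃ ht₁ ht₂ ht₃ ?_ ?_ ?_ hl₁ hl₂ hl₃ h12 h23).mono (by linarith) <;>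
    simp only [mem_ofPred_eq] <;> linarith

lemma reparam_mono {f : ℝ → ℝ} {c d e : ℝ} (hcd : c < d) (hf : ContinuousOn f (Icc c d))
    (he : 0 < e) (hcf : f c ≤ f d)
    (hm : ∀ s ∈ Icc c d, ∀ t ∈ Icc c d, s ≤ t → f s ≤ f t + 2 * e) :
    ∃ φ : ℝ → ℝ, Continuous φ ∧ Monotone φ ∧ (∀ z ≤ 0, φ z = c) ∧ (∀ z, 1 ≤ z → φ z = d) ∧
      ∀ z ∈ Icc (0:ℝ) 1, |f (φ z) - ((1 - z) * f c + z * f d)| ≤ 6 * e := by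
  -- clamp
  set cl : ℝ → ℝ := fun s => max c (min d s) with hcl
  have hclc : Continuous cl := by simp only [hcl]; fun_prop
  have hclm : Monotone cl := fun a b h => max_le_max le_rfl (min_le_min le_rfl h)
  have hclI : ∀ s, cl s ∈ Icc c d := fun s => ⟨le_max_left _ _, max_le hcd.le (min_le_left _ _)⟩
  have hcle : ∀ s ∈ Icc c d, cl s = s := fun s hs => by
    simp only [hcl]; rw [min_eq_right hs.2, max_eq_right hs.1]
  set g : ℝ → ℝ := fun s => f (cl s) with hg
  have hgc : Continuous g := hf.comp_continuous hclc hclI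
  set F : ℝ → ℝ := fun s => sSup ((fun l => g (c + l * (cl s - c))) '' Icc (0:ℝ) 1) with hF
  have hFc : Continuous F := by
    refine IsCompact.continuous_sSup (f := fun s l => g (c + l * (cl s - c))) isCompact_Icc ?_
    have : Continuous (fun p : ℝ × ℝ => g (c + p.2 * (cl p.1 - c))) := by fun_prop
    exact this
  have hbd : ∀ s, BddAbove ((fun l => g (c + l * (cl s - c))) '' Icc (0:ℝ) 1) := fun s =>
    (isCompact_Icc.image (by fun_prop)).bddAbove
  have hFge : ∀ s, ∀ t ∈ Icc c (cl s), f t ≤ F s := by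
    intro s t ht
    have htI : t ∈ Icc c d := ⟨ht.1, ht.2.trans (hclI s).2⟩
    rcases ht.1.eq_or_lt with h | h
    · refine le_csSup (hbd s) ⟨0, by simp, ?_⟩
      simp only [hg, zero_mul, add_zero, hcle c ⟨le_rfl, hcd.le⟩, h]
      rw [← h, hcle c ⟨le_rfl, hcd.le⟩]
    · have hpos : 0 < cl s - c := by linarith [ht.2]
      refine le_csSup (hbd s) ⟨(t - c) / (cl s - c), ⟨div_nonneg (by linarith) hpos.le,
        (div_le_one hpos).2 (by linarith [ht.2])⟩, ?_⟩
      have : c + (t - c) / (cl s - c) * (cl s - c) = t := by field_simp; ring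
      simp only [hg, this, hcle t htI]
  have hFle : ∀ s B, (∀ t ∈ Icc c (cl s), f t ≤ B) → F s ≤ B := by
    intro s B hB
    apply csSup_le ((nonempty_Icc.2 zero_le_one).image _)
    rintro _ ⟨l, hl, rfl⟩
    have h1 : c + l * (cl s - c) ∈ Icc c (cl s) := by
      have := (hclI s).1
      constructor <;> nlinarith [hl.1, hl.2]
    simp only [hg]
    rw [hcle _ ⟨h1.1, h1.2.trans (hclI s).2⟩]
    exact hB _ h1
  have hFm : Monotone F := fun s s' h => hFle s _ fun t ht => hFge s' t ⟨ht.1, ht.2.trans (hclm h)⟩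
  have hF1 : ∀ s ∈ Icc c d, f s ≤ F s := fun s hs => hFge s s ⟨hs.1, (hcle s hs).ge⟩
  have hF2 : ∀ s ∈ Icc c d, F s ≤ f s + 2 * e := fun s hs => hFle s _ fun t ht => by
    rw [hcle s hs] at ht
    exact hm t ⟨ht.1, ht.2.trans hs.2⟩ s hs ht.2
  set G : ℝ → ℝ := fun s => F s + e * (s - c) / (d - c) with hG
  have hdc : 0 < d - c := by linarith
  have hGc : Continuous G := by simp only [hG, div_eq_mul_inv]; fun_prop
  have hGm : StrictMono G := by
    intro a b hab
    have h1 := hFm hab.le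
    have h2 : e * (a - c) / (d - c) < e * (b - c) / (d - c) := by gcongr
    simp only [hG]; linarith
  have hlin : (fun s : ℝ => e * (s - c) / (d - c)) = fun s => (e / (d - c)) * (s - c) := by
    ext s; ring
  have hpos : 0 < e / (d - c) := div_pos he hdc
  have hFd : ∀ s, f c ≤ F s := fun s => hFge s c ⟨le_rfl, (hclI s).1⟩
  have hFu : ∀ s, F s ≤ f d + 2 * e := fun s => hFle s _ fun t ht =>
    hm t ⟨ht.1, ht.2.trans (hclI s).2⟩ d ⟨hcd.le, le_rfl⟩ (ht.2.trans (hclI s).2)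
  have hGs : Function.Surjective G := by
    refine hGc.surjective ?_ ?_
    · refine tendsto_atTop_add_left_of_le _ (f c) hFd ?_
      rw [hlin]
      exact (tendsto_atTop_add_const_right _ (-c) tendsto_id).const_mul_atTop hpos
    · refine tendsto_atBot_add_left_of_ge _ (f d + 2 * e) hFu ?_
      rw [hlin]
      exact (tendsto_atBot_add_const_right _ (-c) tendsto_id).const_mul_atBot hpos
  set Ψ := hGm.orderIsoOfSurjective G hGs with hΨ
  have hΨ1 : ∀ s, Ψ.symm (G s) = s := fun s => Ψ.symm_apply_apply s
  have hΨ2 : ∀ w, G (Ψ.symm w) = w := fun w => Ψ.apply_symm_apply w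
  have hGcd : G c < G d := hGm hcd
  have hGcv : G c = F c := by simp [hG]
  have hGdv : G d = F d + e := by simp only [hG]; field_simp
  have hcI : c ∈ Icc c d := ⟨le_rfl, hcd.le⟩
  have hdI : d ∈ Icc c d := ⟨hcd.le, le_rfl⟩
  set q : ℝ → ℝ := fun z => max 0 (min 1 z) with hq
  have hqm : Monotone q := fun a b h => max_le_max le_rfl (min_le_min le_rfl h)
  have hqc : Continuous q := by simp only [hq]; fun_prop
  refine ⟨fun z => Ψ.symm (G c + q z * (G d - G c)), ?_, ?_, ?_, ?_, ?_⟩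
  · exact Ψ.symm.continuous.comp (by fun_prop)
  · intro a b h
    apply Ψ.symm.monotone
    have := hqm h
    nlinarith
  · intro z hz
    have : q z = 0 := by simp only [hq]; exact max_eq_left ((min_le_right _ _).trans hz)
    simp only [this, zero_mul, add_zero, hΨ1]
  · intro z hz
    have : q z = 1 := by simp only [hq]; rw [min_eq_left hz]; simp
    simp only [this, one_mul, add_sub_cancel, hΨ1]
  · intro z hz
    have hqz : q z = z := by simp only [hq]; rw [min_eq_right hz.2, max_eq_right hz.1]
    simp only [hqz]
    set w := G c + z * (G d - G c) with hw
    set s := Ψ.symm w with hs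
    have hGs' : G s = w := hΨ2 w
    have hsI : s ∈ Icc c d := by
      constructor
      · rw [← hGm.le_iff_le, hGs']; nlinarith [hz.1]
      · rw [← hGm.le_iff_le, hGs']; nlinarith [hz.2]
    have h1 := hF1 s hsI
    have h2 := hF2 s hsI
    have h3 : 0 ≤ e * (s - c) / (d - c) := div_nonneg (mul_nonneg he.le (by linarith [hsI.1])) hdc.le
    have h4 : e * (s - c) / (d - c) ≤ e := by
      rw [div_le_iff₀ hdc]; nlinarith [hsI.2]
    have h5 : F s + e * (s - c) / (d - c) = w := hGs'
    have h6 := hF1 c hcI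
    have h7 := hF2 c hcI
    have h8 := hF1 d hdI
    have h9 := hF2 d hdI
    obtain ⟨hz0, hz1⟩ := hz
    have h10 : w = (1 - z) * F c + z * (F d + e) := by rw [hw, hGcv, hGdv]; ring
    have a1 : 0 ≤ (1 - z) * (F c - f c) := mul_nonneg (by linarith) (by linarith)
    have a2 : (1 - z) * (F c - f c) ≤ (1 - z) * (2 * e) :=
      mul_le_mul_of_nonneg_left (by linarith) (by linarith)
    have a3 : 0 ≤ z * (F d + e - f d) := mul_nonneg hz0 (by linarith)
    have a4 : z * (F d + e - f d) ≤ z * (3 * e) := mul_le_mul_of_nonneg_left (by linarith) hz0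
    have a5 : z * e ≤ e := by nlinarith
    rw [abs_le]
    constructor <;> nlinarith

lemma reparam {f : ℝ → ℝ} {c d e : ℝ} (hcd : c ≤ d) (hf : ContinuousOn f (Icc c d))
    (he : 0 < e) (hB : ∀ s₁ ∈ Icc c d, ∀ s₂ ∈ Icc c d, ∀ s₃ ∈ Icc c d, s₁ ≤ s₂ → s₂ ≤ s₃ →
      Bet e (f s₁) (f s₂) (f s₃)) :
    ∃ φ : ℝ → ℝ, Continuous φ ∧ Monotone φ ∧ (∀ z ≤ 0, φ z = c) ∧ (∀ z, 1 ≤ z → φ z = d) ∧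
      ∀ z ∈ Icc (0:ℝ) 1, |f (φ z) - ((1 - z) * f c + z * f d)| ≤ 6 * e := by
  rcases hcd.eq_or_lt with rfl | hlt
  · refine ⟨fun _ => c, continuous_const, monotone_const, fun _ _ => rfl, fun _ _ => rfl, ?_⟩
    intro z _
    rw [show f c - ((1 - z) * f c + z * f c) = 0 by ring, abs_zero]; linarith
  have hcI : c ∈ Icc c d := ⟨le_rfl, hcd⟩
  have hdI : d ∈ Icc c d := ⟨hcd, le_rfl⟩
  have aux : ∀ f : ℝ → ℝ, f c ≤ f d → (∀ s₁ ∈ Icc c d, ∀ s₂ ∈ Icc c d, ∀ s₃ ∈ Icc c d, s₁ ≤ s₂ →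
      s₂ ≤ s₃ → Bet e (f s₁) (f s₂) (f s₃)) → ∀ s ∈ Icc c d, ∀ t ∈ Icc c d, s ≤ t →
      f s ≤ f t + 2 * e := by
    intro f hfcd hB s hs t ht hst
    have h1 := (hB c hcI s hs t ht hs.1 hst).2
    have h2 := (hB c hcI t ht d hdI ht.1 ht.2).1
    rw [min_eq_left hfcd] at h2
    rcases max_choice (f c) (f t) with h | h <;> rw [h] at h1 <;> linarith
  rcases le_total (f c) (f d) with h | h
  · exact reparam_mono hlt hf he h (aux f h hB)
  · obtain ⟨φ, h1, h2, h3, h4, h5⟩ := reparam_mono (f := fun s => - f s) hlt hf.neg he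
      (by simpa using h) (aux (fun s => - f s) (by simpa using h)
        fun s₁ a s₂ b s₃ c' i j => (hB s₁ a s₂ b s₃ c' i j).neg)
    refine ⟨φ, h1, h2, h3, h4, fun z hz => ?_⟩
    have := h5 z hz
    rw [← abs_neg] at this
    convert this using 2
    ring

lemma win_subset {t₀ δ δ' : ℝ} (h : δ ≤ δ') :
    {t : ℝ | |t - t₀| < δ} ⊆ {t | |t - t₀| < δ'} := by
  intro t ht
  simp only [mem_ofPred_eq] at *
  linarith

lemma ParamRep.comp {T : ℝ} {x u r ψ : ℝ → ℝ} (h : ParamRep T x u r) (hc : Continuous ψ)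
    (hm : Monotone ψ) (h0 : ψ 0 = 0) (h1 : ψ 1 = 1) :
    ParamRep T x (fun s => u (ψ s)) (fun s => r (ψ s)) := by
  have hmap : MapsTo ψ (Icc 0 1) (Icc 0 1) := fun s hs =>
    ⟨h0 ▸ hm hs.1, h1 ▸ hm hs.2⟩
  obtain ⟨a1, a2, a3, a4, a5⟩ := h
  refine ⟨a1.comp hc.continuousOn hmap, a2.comp hc.continuousOn hmap, fun s hs => a3 _ (hmap hs),
    ?_, fun s₁ hs₁ s₂ hs₂ hle => a5 _ (hmap hs₁) _ (hmap hs₂) (hm hle)⟩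
  intro p hp
  obtain ⟨s, hs, he⟩ := a4 p hp
  have := intermediate_value_Icc (zero_le_one (α := ℝ)) hc.continuousOn
  rw [h0, h1] at this
  obtain ⟨z, hz, rfl⟩ := this hs
  exact ⟨z, hz, he⟩

lemma polygon_rep {T : ℝ} (hT : 0 < T) {x : ℝ → ℝ} (hx : Cadlag T x) {N : ℕ} (hN : 0 < N)
    {t : ℕ → ℝ} (ht0 : t 0 = 0) (htN : t N = T) (htI : ∀ k ≤ N, t k ∈ Icc 0 T)
    (htm : ∀ k < N, t k ≤ t (k + 1)) {e : ℝ} (he : 0 < e)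
    (hNM : ∀ k < N, NM T x e (Icc (t k) (t (k + 1)))) :
    ∃ u r, ParamRep T x u r ∧ ∀ k < N, ∀ z ∈ Icc (0:ℝ) 1,
      |u (((k:ℝ) + z) / N) - ((1 - z) * x (t k) + z * x (t (k + 1)))| ≤ 6 * e ∧
      r (((k:ℝ) + z) / N) ∈ Icc (t k) (t (k + 1)) := by
  obtain ⟨u, r, h⟩ := exists_paramRep hT hx
  obtain ⟨S, hS, hSm⟩ := h.exists_sec
  obtain ⟨Λ, hΛ, hΛm⟩ := h.exists_lex
  have h1I : (1:ℝ) ∈ Icc (0:ℝ) 1 := by simp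
  have h0I : (0:ℝ) ∈ Icc (0:ℝ) 1 := by simp
  set σ : ℕ → ℝ := fun k => if k = 0 then 0 else if k = N then 1 else S (t k) 1 with hσ
  have hσ0 : σ 0 = 0 := by simp [hσ]
  have hσN : σ N = 1 := by simp [hσ, hN.ne']
  have hσp : ∀ k ≤ N, σ k ∈ Icc (0:ℝ) 1 ∧ u (σ k) = x (t k) ∧ r (σ k) = t k := by
    intro k hk
    by_cases hk0 : k = 0
    · subst hk0; rw [hσ0, ht0]; exact ⟨h0I, h.zero hT⟩
    by_cases hkN : k = N
    · subst hkN; rw [hσN, htN]; exact ⟨h1I, h.one hT⟩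
    have := hS (t k) (htI k hk) 1 h1I
    simp only [hσ, hk0, hkN, if_false]
    refine ⟨this.1, ?_, this.2.2⟩
    rw [this.2.1]; simp [gp]
  have hσm : ∀ k < N, σ k ≤ σ (k + 1) := by
    intro k hk
    by_cases hk0 : k = 0
    · subst hk0; rw [hσ0]; exact (hσp 1 hk).1.1
    by_cases hkN : k + 1 = N
    · rw [hkN, hσN]; exact (hσp k hk.le).1.2
    simp only [hσ, hk0, hk.ne, hkN, if_false, Nat.add_eq_zero_iff, false_and]
    refine hSm _ (htI k hk.le) _ h1I _ (htI _ hk) _ h1I ?_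
    rcases (htm k hk).eq_or_lt with h | h
    · exact Or.inr ⟨h, le_rfl⟩
    · exact Or.inl h
  have hph : ∀ k, k < N → ∃ φ : ℝ → ℝ, Continuous φ ∧ Monotone φ ∧ (∀ z ≤ 0, φ z = σ k) ∧
      (∀ z, 1 ≤ z → φ z = σ (k + 1)) ∧ ∀ z ∈ Icc (0:ℝ) 1,
        |u (φ z) - ((1 - z) * u (σ k) + z * u (σ (k + 1)))| ≤ 6 * e := by
    intro k hk
    have hsub : Icc (σ k) (σ (k + 1)) ⊆ Icc (0:ℝ) 1 :=
      Icc_subset_Icc (hσp k hk.le).1.1 (hσp (k + 1) hk).1.2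
    refine reparam (hσm k hk) (h.1.mono hsub) he ?_
    intro s₁ hs₁ s₂ hs₂ s₃ hs₃ h12 h23
    have hr : ∀ s ∈ Icc (σ k) (σ (k + 1)), r s ∈ Icc (t k) (t (k + 1)) := by
      intro s hs
      have a := h.r_mono (hσp k hk.le).1 (hsub hs) hs.1
      have b := h.r_mono (hsub hs) (hσp (k + 1) hk).1 hs.2
      rw [(hσp k hk.le).2.2] at a
      rw [(hσp (k + 1) hk).2.2] at b
      exact ⟨a, b⟩
    have hrI : ∀ s ∈ Icc (σ k) (σ (k + 1)), r s ∈ Icc 0 T := fun s hs => (h.2.2.1 s (hsub hs)).1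
    rw [(hΛ _ (hsub hs₁)).2, (hΛ _ (hsub hs₂)).2, (hΛ _ (hsub hs₃)).2]
    exact hNM k hk _ _ _ _ _ _ (hrI _ hs₁) (hrI _ hs₂) (hrI _ hs₃) (hr _ hs₁) (hr _ hs₂)
      (hr _ hs₃) (hΛ _ (hsub hs₁)).1 (hΛ _ (hsub hs₂)).1 (hΛ _ (hsub hs₃)).1
      (hΛm _ (hsub hs₁) _ (hsub hs₂) h12) (hΛm _ (hsub hs₂) _ (hsub hs₃) h23)
  choose! φ hφc hφm hφ0 hφ1 hφe using hph
  set Φ : ℝ → ℝ := fun y => ∑ k ∈ Finset.range N, (φ k (y - k) - σ k) with hΦ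
  have hΦc : Continuous Φ := by
    refine continuous_finsetSum _ fun k hk => ?_
    have := hφc k (Finset.mem_range.1 hk)
    fun_prop
  have hΦm : Monotone Φ := by
    intro y y' hy
    refine Finset.sum_le_sum fun k hk => ?_
    have := hφm k (Finset.mem_range.1 hk) (show y - k ≤ y' - k by linarith)
    linarith
  have hΦv : ∀ k < N, ∀ z ∈ Icc (0:ℝ) 1, Φ (k + z) = φ k z := by
    intro k hk z hz
    have e1 : Φ (k + z) = ∑ j ∈ Finset.range N, ((if j < k then σ (j + 1) - σ j else 0) +
        if j = k then φ k z - σ k else 0) := by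
      refine Finset.sum_congr rfl fun j hj => ?_
      have hjN := Finset.mem_range.1 hj
      rcases lt_trichotomy j k with h | h | h
      · have : (j:ℝ) + 1 ≤ k := by exact_mod_cast h
        rw [hφ1 j hjN _ (by linarith [hz.1])]; simp [h, h.ne]
      · subst h; simp
      · have : (k:ℝ) + 1 ≤ j := by exact_mod_cast h
        rw [hφ0 j hjN _ (by linarith [hz.2])]; simp [h.ne', not_lt.2 h.le]
    rw [e1, Finset.sum_add_distrib, Finset.sum_ite_eq' , if_pos (Finset.mem_range.2 hk),
      ← Finset.sum_filter]
    have : (Finset.range N).filter (fun j => j < k) = Finset.range k := by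
      ext j; simp only [Finset.mem_filter, Finset.mem_range]; omega
    rw [this, Finset.sum_range_sub, hσ0]; ring
  have hNpos : (0:ℝ) < N := by exact_mod_cast hN
  refine ⟨_, _, h.comp (ψ := fun s => Φ (s * N)) (hΦc.comp (by fun_prop))
    (fun a b hab => hΦm (mul_le_mul_of_nonneg_right hab hNpos.le)) ?_ ?_, ?_⟩
  · have := hΦv 0 hN 0 h0I
    simp only [Nat.cast_zero, add_zero] at this
    simp only [zero_mul, this]
    rw [hφ0 0 hN 0 le_rfl, hσ0]
  · have hN1 : N - 1 < N := by omega
    have := hΦv (N - 1) hN1 1 h1I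
    rw [hφ1 (N - 1) hN1 1 le_rfl, Nat.sub_add_cancel hN, hσN, Nat.cast_sub hN] at this
    simpa using this
  · intro k hk z hz
    have hz' : ((k:ℝ) + z) / N * N = k + z := by field_simp
    simp only [hz', hΦv k hk z hz]
    have a := hφe k hk z hz
    rw [(hσp k hk.le).2.1, (hσp (k + 1) hk).2.1] at a
    refine ⟨a, ?_⟩
    have b1 : σ k ≤ φ k z := by
      rw [← hφ0 k hk 0 le_rfl]; exact hφm k hk hz.1
    have b2 : φ k z ≤ σ (k + 1) := by
      rw [← hφ1 k hk 1 le_rfl]; exact hφm k hk hz.2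
    have hI : φ k z ∈ Icc (0:ℝ) 1 :=
      ⟨(hσp k hk.le).1.1.trans b1, b2.trans (hσp (k + 1) hk).1.2⟩
    have a' := h.r_mono (hσp k hk.le).1 hI b1
    have b' := h.r_mono hI (hσp (k + 1) hk).1 b2
    rw [(hσp k hk.le).2.2] at a'
    rw [(hσp (k + 1) hk).2.2] at b'
    exact ⟨a', b'⟩

lemma exists_partition {T : ℝ} (hT : 0 < T) {D : Set ℝ} (hD : D.Countable) {δ : ℝ} (hδ : 0 < δ) :
    ∃ (N : ℕ) (t : ℕ → ℝ), 0 < N ∧ t 0 = 0 ∧ t N = T ∧ (∀ k ≤ N, t k ∈ Icc 0 T) ∧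
      (∀ k < N, t k ≤ t (k + 1) ∧ t (k + 1) - t k < δ) ∧ ∀ k ≤ N, t k ∉ D ∨ t k = 0 ∨ t k = T := by
  obtain ⟨N, hN⟩ := exists_nat_gt (2 * T / δ)
  have hNpos : (0:ℝ) < N := lt_trans (by positivity) hN
  have hN0 : 0 < N := by exact_mod_cast hNpos
  have hT' : 0 < T / (N + 1) := by positivity
  set w := T / ((N:ℝ) + 1) with hw
  have hwT : w * (N + 1) = T := by rw [hw]; field_simp
  have hwδ : 2 * w < δ := by
    rw [div_lt_iff₀ hδ] at hN
    by_contra hcon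
    push Not at hcon
    nlinarith
  have hex : ∀ k : ℕ, ∃ y, y ∈ Ioo (w * k) (w * (k + 1)) ∧ y ∉ D := by
    intro k
    obtain ⟨y, hy1, hy2⟩ := (hD.dense_compl ℝ).exists_mem_open (isOpen_Ioo (a := w * (k:ℝ)) (b := w * (k + 1)))
      (nonempty_Ioo.2 (by nlinarith))
    exact ⟨y, hy2, hy1⟩
  choose y hy hyD using hex
  set t : ℕ → ℝ := fun k => if k = 0 then 0 else if k = N then T else y k with ht
  have ht0 : t 0 = 0 := by simp [ht]
  have htN : t N = T := by simp [ht, hN0.ne']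
  have htb : ∀ k ≤ N, w * k ≤ t k ∧ t k ≤ w * (k + 1) := by
    intro k hk
    by_cases hk0 : k = 0
    · subst hk0; rw [ht0]; simp [hT'.le]
    by_cases hkN : k = N
    · subst hkN; rw [htN, ← hwT]; constructor <;> nlinarith
    simp only [ht, hk0, hkN, if_false]
    exact ⟨(hy k).1.le, (hy k).2.le⟩
  refine ⟨N, t, hN0, ht0, htN, ?_, ?_, ?_⟩
  · intro k hk
    have := htb k hk
    have hk' : (k:ℝ) ≤ N := by exact_mod_cast hk
    have hk0 : (0:ℝ) ≤ k := Nat.cast_nonneg k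
    constructor <;> nlinarith
  · intro k hk
    have h1 := htb k hk.le
    have h2 := htb (k + 1) hk
    push_cast at h2
    constructor <;> nlinarith
  · intro k _
    by_cases hk0 : k = 0
    · subst hk0; exact Or.inr (Or.inl ht0)
    by_cases hkN : k = N
    · subst hkN; exact Or.inr (Or.inr htN)
    simp only [ht, hk0, hkN, if_false]
    exact Or.inl (hyD k)

lemma glob {T : ℝ} {Q : ℕ → Set ℝ → Prop} (hQ : ∀ n W W', W ⊆ W' → Q n W' → Q n W)
    (H : ∀ t₀ ∈ Icc 0 T, ∃ δ > 0, ∀ᶠ n in atTop, Q n {t | |t - t₀| < δ}) :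
    ∃ δ > 0, ∀ᶠ n in atTop, ∀ t ∈ Icc 0 T, Q n (Metric.ball t δ) := by
  choose! d hd hev using H
  obtain ⟨F, hF, hcov⟩ := (isCompact_Icc (a := (0:ℝ)) (b := T)).elim_nhds_subcover
    (fun t => Metric.ball t (d t)) (fun t ht => Metric.ball_mem_nhds t (hd t ht))
  obtain ⟨δ, hδ, hleb⟩ := lebesgue_number_lemma_of_metric (ι := F)
    (c := fun i => Metric.ball (i:ℝ) (d i)) (isCompact_Icc (a := (0:ℝ)) (b := T))
    (fun i => Metric.isOpen_ball) (by
      intro t ht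
      obtain ⟨i, hi, h⟩ := mem_iUnion₂.1 (hcov ht)
      exact mem_iUnion.2 ⟨⟨i, hi⟩, h⟩)
  refine ⟨δ, hδ, ?_⟩
  have : ∀ᶠ n in atTop, ∀ i ∈ F, Q n {t | |t - i| < d i} :=
    (Finset.eventually_all F).2 fun i hi => hev i (hF i hi)
  filter_upwards [this] with n hn t ht
  obtain ⟨i, hi⟩ := hleb t ht
  refine hQ n _ _ ?_ (hn i i.2)
  intro s hs
  have := hi hs
  rwa [Metric.mem_ball, Real.dist_eq] at this

lemma NM.subset {T : ℝ} {x : ℝ → ℝ} {e : ℝ} {W W' : Set ℝ} (h : NM T x e W') (hW : W ⊆ W') :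
    NM T x e W := by
  intro t₁ l₁ t₂ l₂ t₃ l₃ ht₁ ht₂ ht₃ hw₁ hw₂ hw₃
  exact h t₁ l₁ t₂ l₂ t₃ l₃ ht₁ ht₂ ht₃ (hW hw₁) (hW hw₂) (hW hw₃)

lemma gp_close {T : ℝ} {x y : ℝ → ℝ} (hx : Cadlag T x) (hy : Cadlag T y) {t₀ δ e : ℝ}
    (H : ∀ s ∈ Icc 0 T, |s - t₀| < δ → |x s - y s| ≤ e) {t l : ℝ} (ht : t ∈ Icc 0 T)
    (htt : |t - t₀| < δ) (hl : l ∈ Icc (0:ℝ) 1) : |gp x t l - gp y t l| ≤ e := by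
  rw [← gp_sub hx hy ht, ← sub_zero (gp _ t l)]
  rw [abs_lt] at htt
  refine gp_bound (hx.sub hy) ht (η := t - (t₀ - δ)) (by linarith) (fun s hs h1 h2 => ?_) hl
  simp only [sub_zero]
  exact H s hs (abs_lt.2 ⟨by linarith, by linarith⟩)

lemma Bet.shift {e p q r : ℝ} (H : Bet e p q r) (K : ℝ) : Bet e (K + p) (K + q) (K + r) := by
  obtain ⟨h1, h2⟩ := H
  constructor
  · rw [min_add_add_left]; linarith
  · rw [max_add_add_left]; linarith

lemma sum_local {T : ℝ} (hT : 0 < T)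
    {a b : ℕ → ℝ → ℝ} {a₀ b₀ : ℝ → ℝ}
    (ha : ∀ n, Cadlag T (a n)) (hb : ∀ n, Cadlag T (b n))
    (ha₀ : Cadlag T a₀) (hb₀ : Cadlag T b₀)
    (haconv : TendstoUniformlyOn (fun n => a n) a₀ Filter.atTop (Set.Icc 0 T))
    (hbconv : Filter.Tendsto (fun n => dM1 T (b n) b₀) Filter.atTop (nhds 0))
    (hloc : ∀ t ∈ Set.Icc (0:ℝ) T, jumpAt a₀ t ≠ 0 → ∃ δ > (0:ℝ),
      TendstoUniformlyOn (fun n => b n) b₀ Filter.atTop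
        (Set.Icc 0 T ∩ Set.Icc (t - δ) (t + δ))) {e : ℝ} (he : 0 < e) {t₀ : ℝ}
    (ht₀ : t₀ ∈ Icc 0 T) :
    ∃ δ > 0, ∀ᶠ n in atTop, NM T (fun s => a n s + b n s) e {t | |t - t₀| < δ} := by
  have he8 : 0 < e / 8 := by linarith
  have haev := Metric.tendstoUniformlyOn_iff.1 haconv (e / 8) he8
  by_cases hj : jumpAt a₀ t₀ = 0
  · have hj' : leftVal a₀ t₀ = a₀ t₀ := (sub_eq_zero.1 hj).symm
    obtain ⟨δ₁, hδ₁, H₁⟩ := local_window ha₀ ht₀ he8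
    obtain ⟨δ₂, hδ₂, H₂⟩ := NM_M1 hT hb hb₀ hbconv ht₀ (half_pos he)
    refine ⟨min δ₁ δ₂, lt_min hδ₁ hδ₂, ?_⟩
    filter_upwards [H₂, haev] with n hn hna
    have key : ∀ t l, t ∈ Icc 0 T → l ∈ Icc (0:ℝ) 1 → |t - t₀| < min δ₁ δ₂ →
        |gp (fun s => a n s + b n s) t l - (a₀ t₀ + gp (b n) t l)| ≤ e / 4 := by
      intro t l ht hl hw
      rw [gp_add (ha n) (hb n) ht]
      have h1 : |gp (a n) t l - gp a₀ t l| ≤ e / 8 := by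
        refine gp_close (ha n) ha₀ (t₀ := t₀) (fun s hs _ => ?_) ht hw hl
        have := hna s hs
        rw [dist_comm, Real.dist_eq] at this
        exact this.le
      have h2 : |gp a₀ t l - a₀ t₀| ≤ e / 8 := by
        have w := H₁ t ht (hw.trans_le (min_le_left _ _)) l hl
        rcases lt_trichotomy t t₀ with h | h | h
        · rw [hj'] at w; exact w.1 h
        · rw [h]; simp only [gp, hj']
          rw [show (1 - l) * a₀ t₀ + l * a₀ t₀ - a₀ t₀ = 0 by ring, abs_zero]; linarith
        · exact w.2 h
      rw [abs_le] at *
      constructor <;> linarith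
    intro t₁ l₁ t₂ l₂ t₃ l₃ ht₁ ht₂ ht₃ hw₁ hw₂ hw₃ hl₁ hl₂ hl₃ h12 h23
    have := (((hn.subset (W := {t | |t - t₀| < min δ₁ δ₂})
      (win_subset (min_le_right _ _))) t₁ l₁ t₂ l₂ t₃ l₃ ht₁ ht₂ ht₃
      hw₁ hw₂ hw₃ hl₁ hl₂ hl₃ h12 h23).shift (a₀ t₀)).perturb (key t₁ l₁ ht₁ hl₁ hw₁)
      (key t₂ l₂ ht₂ hl₂ hw₂) (key t₃ l₃ ht₃ hl₃ hw₃)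
    exact this.mono (by linarith)
  · obtain ⟨δ₁, hδ₁, H₁⟩ := hloc t₀ ht₀ hj
    obtain ⟨δ₂, hδ₂, H₂⟩ := NM_local (ha₀.add hb₀) ht₀ (half_pos he)
    refine ⟨min δ₁ δ₂, lt_min hδ₁ hδ₂, ?_⟩
    filter_upwards [Metric.tendstoUniformlyOn_iff.1 H₁ (e / 8) he8, haev] with n hnb hna
    have key : ∀ t l, t ∈ Icc 0 T → l ∈ Icc (0:ℝ) 1 → |t - t₀| < min δ₁ δ₂ →
        |gp (fun s => a n s + b n s) t l - gp (fun s => a₀ s + b₀ s) t l| ≤ e / 4 := by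
      intro t l ht hl hw
      refine gp_close ((ha n).add (hb n)) (ha₀.add hb₀) (t₀ := t₀) (fun s hs hss => ?_) ht hw hl
      have h1 := hna s hs
      have h3 := abs_lt.1 (hss.trans_le (min_le_left _ _))
      have h2 := hnb s ⟨hs, by linarith, by linarith⟩
      rw [dist_comm, Real.dist_eq, abs_lt] at h1 h2
      rw [abs_le]
      constructor <;> linarith
    intro t₁ l₁ t₂ l₂ t₃ l₃ ht₁ ht₂ ht₃ hw₁ hw₂ hw₃ hl₁ hl₂ hl₃ h12 h23
    have := ((H₂.subset (W := {t | |t - t₀| < min δ₁ δ₂})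
      (win_subset (min_le_right _ _))) t₁ l₁ t₂ l₂ t₃ l₃ ht₁ ht₂ ht₃
      hw₁ hw₂ hw₃ hl₁ hl₂ hl₃ h12 h23).perturb (key t₁ l₁ ht₁ hl₁ hw₁)
      (key t₂ l₂ ht₂ hl₂ hw₂) (key t₃ l₃ ht₃ hl₃ hw₃)
    exact this.mono (by linarith)

lemma exists_cell {N : ℕ} (hN : 0 < N) {s : ℝ} (hs : s ∈ Icc (0:ℝ) 1) :
    ∃ k < N, ∃ z ∈ Icc (0:ℝ) 1, s = ((k:ℝ) + z) / N := by
  have hNpos : (0:ℝ) < N := by exact_mod_cast hN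
  rcases hs.2.eq_or_lt with rfl | h
  · refine ⟨N - 1, by omega, 1, by simp, ?_⟩
    rw [Nat.cast_sub hN]; field_simp; simp
  · have h0 : 0 ≤ s * N := mul_nonneg hs.1 hNpos.le
    refine ⟨⌊s * N⌋₊, ?_, s * N - ⌊s * N⌋₊, ⟨?_, ?_⟩, ?_⟩
    · rw [Nat.floor_lt h0]; nlinarith
    · linarith [Nat.floor_le h0]
    · linarith [Nat.lt_floor_add_one (s * N)]
    · field_simp; ring


/-- allowed cancellation of jumps for M1. If `αₙ → α₀` uniformly on `[0,T]`,
`βₙ → β₀` in the Skorokhod M1 topology, and near every discontinuity point of `α₀` the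
convergence `βₙ → β₀` is uniform, then `αₙ + βₙ → α₀ + β₀` in M1. -/
theorem M1_addition_with_jump_cancellation
    (T : ℝ) (hT : 0 < T)
    (a b : ℕ → ℝ → ℝ) (a₀ b₀ : ℝ → ℝ)
    (ha : ∀ n, Cadlag T (a n)) (hb : ∀ n, Cadlag T (b n))
    (ha₀ : Cadlag T a₀) (hb₀ : Cadlag T b₀)
    (haconv : TendstoUniformlyOn (fun n => a n) a₀ Filter.atTop (Set.Icc 0 T))
    (hbconv : Filter.Tendsto (fun n => dM1 T (b n) b₀) Filter.atTop (nhds 0))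
    (hloc : ∀ t ∈ Set.Icc (0:ℝ) T, jumpAt a₀ t ≠ 0 → ∃ δ > (0:ℝ),
      TendstoUniformlyOn (fun n => b n) b₀ Filter.atTop
        (Set.Icc 0 T ∩ Set.Icc (t - δ) (t + δ))) :
    Filter.Tendsto (fun n => dM1 T (fun s => a n s + b n s) (fun s => a₀ s + b₀ s))
      Filter.atTop (nhds 0) := by
  have main : ∀ e : ℝ, 0 < e → ∀ᶠ n in atTop,
      dM1 T (fun s => a n s + b n s) (fun s => a₀ s + b₀ s) ≤ 13 * e := by
    intro e he
    obtain ⟨δ, hδ, hev⟩ := glob (T := T)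
      (Q := fun n W => NM T (fun s => a n s + b n s) e W ∧ NM T (fun s => a₀ s + b₀ s) e W)
      (fun n W W' hW h => ⟨h.1.subset hW, h.2.subset hW⟩) (by
        intro t₀ ht₀
        obtain ⟨δ₁, hδ₁, H₁⟩ := sum_local hT ha hb ha₀ hb₀ haconv hbconv hloc he ht₀
        obtain ⟨δ₂, hδ₂, H₂⟩ := NM_local (ha₀.add hb₀) ht₀ he
        refine ⟨min δ₁ δ₂, lt_min hδ₁ hδ₂, ?_⟩
        filter_upwards [H₁] with n hn
        exact ⟨hn.subset (win_subset (min_le_left _ _)),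
          H₂.subset (win_subset (min_le_right _ _))⟩)
    obtain ⟨N, t, hN, ht0, htN, htI, htm, htD⟩ := exists_partition hT (countable_jumps hb₀)
      (lt_min hδ he)
    have hpt : ∀ᶠ n in atTop, ∀ k ∈ Finset.range (N + 1), |b n (t k) - b₀ (t k)| ≤ e / 2 := by
      refine (Finset.eventually_all _).2 fun k hk => ?_
      have hk' : k ≤ N := by simpa [Nat.lt_succ_iff] using hk
      refine point_conv hT hb hb₀ hbconv (htI k hk') ?_ (half_pos he)
      rcases htD k hk' with h | h | h
      · left
        by_contra hcon
        exact h ⟨htI k hk', hcon⟩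
      · left; rw [h, leftVal_zero]
      · right; exact h
    filter_upwards [hev, hpt, Metric.tendstoUniformlyOn_iff.1 haconv (e / 2) (half_pos he)]
      with n hn hnb hna
    have hsub : ∀ k < N, Icc (t k) (t (k + 1)) ⊆ Metric.ball (t k) δ := by
      intro k hk s hs
      have := (htm k hk).2.trans_le (min_le_left _ _)
      rw [Metric.mem_ball, Real.dist_eq, abs_lt]
      constructor <;> linarith [hs.1, hs.2]
    obtain ⟨u, r, h, hu⟩ := polygon_rep hT ((ha n).add (hb n)) hN ht0 htN htI
      (fun k hk => (htm k hk).1) he (fun k hk => (hn (t k) (htI k hk.le)).1.subset (hsub k hk))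
    obtain ⟨v, ρ, h', hv⟩ := polygon_rep hT (ha₀.add hb₀) hN ht0 htN htI
      (fun k hk => (htm k hk).1) he (fun k hk => (hn (t k) (htI k hk.le)).2.subset (hsub k hk))
    refine dM1_le h h' fun s hs => ?_
    obtain ⟨k, hk, z, hz, rfl⟩ := exists_cell hN hs
    obtain ⟨u1, u2⟩ := hu k hk z hz
    obtain ⟨v1, v2⟩ := hv k hk z hz
    have hc : ∀ j ≤ N, |(a n (t j) + b n (t j)) - (a₀ (t j) + b₀ (t j))| ≤ e := by
      intro j hj
      have h1 := hna (t j) (htI j hj)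
      have h2 := hnb j (Finset.mem_range.2 (by omega))
      rw [dist_comm, Real.dist_eq, abs_lt] at h1
      rw [abs_le] at *
      constructor <;> linarith
    have hcomb := comb_bound (A := 0) (by simpa using hc k hk.le) (by simpa using hc (k + 1) hk) hz
    constructor
    · rw [abs_le] at *
      constructor <;> linarith
    · have := (htm k hk).2.trans_le (min_le_right _ _)
      rw [abs_le]
      constructor <;> linarith [u2.1, u2.2, v2.1, v2.2]
  rw [Metric.tendsto_nhds]
  intro e he
  filter_upwards [main (e / 26) (by linarith)] with n hn
  rw [Real.dist_eq, sub_zero, abs_of_nonneg (dM1_nonneg _ _ _)]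
  linarith
end
end

section
/- Fix constants β > 0, σ̂ > 0 and 0 < λ_min ≤ λ_max. Let f : ℝ → ℝ be twice continuously differentiable with f > 0 and f' > 0, such that λ_min ≤ f'(y)/f(y) ≤ λ_max for all y ∈ ℝ and the derivative of y ↦ f'(y)/f(y) is bounded on ℝ. Define ψ(y) := −β·y·f(y) + (σ̂²/2)·f'(y). Then ψ(y) → 0 as y → −∞ and ψ(y) → −∞ as y → +∞; moreover ψ(y) > 0 for every y < 0, and ψ is bounded above on ℝ. -/
open Filter Set Topology

noncomputable section

/-- asymptotics of `ψ(y) = −β·y·f(y) + (σ̂²/2)·f'(y)`: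
`ψ(y) → 0` as `y → −∞`, `ψ(y) → −∞` as `y → +∞`, `ψ(y) > 0` for every `y < 0`,
and `ψ` is bounded above on `ℝ`. -/
theorem psi_asymptotics
    (β σ lmin lmax : ℝ) (hβ : 0 < β) (hσ : 0 < σ)
    (hlmin : 0 < lmin) (hll : lmin ≤ lmax)
    (f : ℝ → ℝ) (hf : ContDiff ℝ 2 f)
    (hfpos : ∀ y, 0 < f y) (hf' : ∀ y, 0 < deriv f y)
    (hlam : ∀ y, lmin ≤ deriv f y / f y ∧ deriv f y / f y ≤ lmax)
    (hlam' : ∃ C : ℝ, ∀ y, |deriv (fun z => deriv f z / f z) y| ≤ C)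
    (ψ : ℝ → ℝ)
    (hψ : ∀ y, ψ y = -β * y * f y + σ ^ 2 / 2 * deriv f y) :
    Filter.Tendsto ψ Filter.atBot (nhds 0) ∧
    Filter.Tendsto ψ Filter.atTop Filter.atBot ∧
    (∀ y < (0:ℝ), 0 < ψ y) ∧
    (∃ C : ℝ, ∀ y : ℝ, ψ y ≤ C) := by
  have hd : Differentiable ℝ f := hf.differentiable (by norm_num)
  have hmono : Monotone f := (strictMono_of_deriv_pos hf').monotone
  have h1 : ∀ y, lmin * f y ≤ deriv f y := fun y => (le_div_iff₀ (hfpos y)).1 (hlam y).1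
  have h2 : ∀ y, deriv f y ≤ lmax * f y := fun y => (div_le_iff₀ (hfpos y)).1 (hlam y).2
  have hg : Monotone (fun y => f y * Real.exp (-(lmin * y))) := by
    have hD : ∀ y, HasDerivAt (fun y => f y * Real.exp (-(lmin * y)))
        (deriv f y * Real.exp (-(lmin * y)) + f y * (Real.exp (-(lmin * y)) * (-(lmin * 1)))) y :=
      fun y => (hd y).hasDerivAt.mul (((hasDerivAt_id y).const_mul lmin).neg.exp)
    apply monotone_of_deriv_nonneg (fun y => (hD y).differentiableAt)
    intro y
    rw [(hD y).deriv]
    have := mul_nonneg (sub_nonneg.2 (h1 y)) (Real.exp_pos (-(lmin * y))).le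
    nlinarith
  have hexp : ∀ y ≤ (0:ℝ), f y ≤ f 0 * Real.exp (lmin * y) := by
    intro y hy
    have h := hg hy
    simp only [mul_zero, neg_zero, Real.exp_zero, mul_one] at h
    rw [Real.exp_neg, ← div_eq_mul_inv, div_le_iff₀ (Real.exp_pos _)] at h
    exact h
  obtain ⟨K, hK⟩ : ∃ K, K = σ ^ 2 / 2 * lmax := ⟨_, rfl⟩
  have hKpos : 0 < K := by
    have : 0 < lmax := by linarith
    rw [hK]; positivity
  have hub : ∀ y, ψ y ≤ (-β * y + K) * f y := by
    intro y
    have := mul_le_mul_of_nonneg_left (h2 y) (by positivity : 0 ≤ σ ^ 2 / 2)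
    rw [hψ, hK]
    linarith
  have hpos : ∀ y < (0:ℝ), 0 < ψ y := by
    intro y hy
    rw [hψ]
    have a : 0 < -β * y * f y := mul_pos (by nlinarith) (hfpos y)
    have b : 0 < σ ^ 2 / 2 * deriv f y := mul_pos (by positivity) (hf' y)
    linarith
  have hub2 : ∀ y ≤ (0:ℝ), ψ y ≤ (-β * y + K) * (f 0 * Real.exp (lmin * y)) := fun y hy =>
    (hub y).trans (mul_le_mul_of_nonneg_left (hexp y hy) (by nlinarith))
  refine ⟨?_, ?_, hpos, ?_⟩
  · have hlim : Tendsto (fun y : ℝ => (-β * y + K) * (f 0 * Real.exp (lmin * y))) atBot (𝓝 0) := by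
      have ht : Tendsto (fun y : ℝ => -lmin * y) atBot atTop :=
        tendsto_id.const_mul_atBot_of_neg (by linarith)
      have e1 := (Real.tendsto_pow_mul_exp_neg_atTop_nhds_zero 1).comp ht
      have e0 := (Real.tendsto_pow_mul_exp_neg_atTop_nhds_zero 0).comp ht
      have e := (e1.const_mul (β / lmin * f 0)).add (e0.const_mul (K * f 0))
      simp only [mul_zero, add_zero] at e
      refine e.congr fun y => ?_
      simp only [Function.comp, pow_one, pow_zero, neg_mul, neg_neg]
      field_simp
    refine squeeze_zero' ?_ ?_ hlim
    · filter_upwards [eventually_lt_atBot (0:ℝ)] with y hy using (hpos y hy).le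
    · filter_upwards [eventually_le_atBot (0:ℝ)] with y hy using hub2 y hy
  · have hlim : Tendsto (fun y : ℝ => (-β * y + K) * f 0) atTop atBot :=
      (tendsto_atBot_add_const_right _ K
        (tendsto_id.const_mul_atTop_of_neg (by linarith : -β < 0))).atBot_mul_const (hfpos 0)
    refine tendsto_atBot_mono' _ ?_ hlim
    filter_upwards [eventually_ge_atTop (0:ℝ), eventually_ge_atTop (K / β)] with y hy hy2
    rw [div_le_iff₀ hβ] at hy2
    exact (hub y).trans (mul_le_mul_of_nonpos_left (hmono hy) (by linarith))
  · refine ⟨max (f 0 * (β / lmin + K)) (K * f (K / β)), fun y => ?_⟩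
    rcases le_total y 0 with hy | hy
    · refine le_max_of_le_left ((hub2 y hy).trans ?_)
      have hE := Real.exp_pos (lmin * y)
      have hE1 : Real.exp (lmin * y) ≤ 1 := Real.exp_le_one_iff.2 (by nlinarith)
      have hE2 : -(lmin * y) * Real.exp (lmin * y) ≤ 1 := by
        have h := Real.add_one_le_exp (-(lmin * y))
        have h3 : Real.exp (-(lmin * y)) * Real.exp (lmin * y) = 1 := by
          rw [← Real.exp_add]; simp
        nlinarith
      have key : (-β * y + K) * Real.exp (lmin * y) ≤ β / lmin + K := by
        have a : -β * y * Real.exp (lmin * y)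
            = β / lmin * (-(lmin * y) * Real.exp (lmin * y)) := by field_simp
        have b := mul_le_mul_of_nonneg_left hE2 (by positivity : 0 ≤ β / lmin)
        nlinarith
      have := mul_le_mul_of_nonneg_left key (hfpos 0).le
      linarith
    · refine le_max_of_le_right ((hub y).trans ?_)
      rcases le_total y (K / β) with h | h
      · have h3 := hmono h
        have h4 := hfpos y
        have h5 := mul_nonneg (mul_nonneg hβ.le hy) h4.le
        nlinarith
      · rw [div_le_iff₀ hβ] at h
        have := mul_nonneg (by linarith : 0 ≤ β * y - K) (hfpos y).le
        have := mul_pos hKpos (hfpos (K / β))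
        linarith
end
end
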